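/- arXiv:2112.14803 — 2 statements merged into one kernel-verified Lean document; each statement's English description precedes it below -/
import Mathlib

section
/- Let q ≥ 5 be a prime power. If q is odd and ρ ∈ F_q is a non-square, then the line through (1:0:ρ:0) and (0:1:0:ρ) is an imaginary chord of the twisted cubic C, and its stabilizer in G_q has order 2(q+1). If q is even and η ∈ F_q has absolute trace 1, then the line through (η+1:1:1:0) and (η:η:0:1) is an imaginary chord of C, and its stabilizer in G_q has order 2(q+1). -/
open Matrix Submodule

noncomputable section

/-- Row-vector action of an invertible matrix on subspaces of `F^4`:
a projectivity of `PG(3,q)` induced by the matrix. -/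
def projAct (F : Type) [Field F] (A : GL (Fin 4) F) :
    Submodule F (Fin 4 → F) → Submodule F (Fin 4 → F) :=
  fun W => W.map (Matrix.vecMulLinear (A : Matrix (Fin 4) (Fin 4) F))

/-- Representative vectors of the points of the twisted cubic. -/
def cubicVecs (F : Type) [Field F] : Set (Fin 4 → F) :=
  {v | (∃ t : F, v = ![t ^ 3, t ^ 2, t, 1]) ∨ v = ![1, 0, 0, 0]}

/-- The twisted cubic, as a set of projective points (1-dimensional subspaces). -/
def twistedCubic (F : Type) [Field F] : Set (Submodule F (Fin 4 → F)) :=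
  (fun v => Submodule.span F {v}) '' cubicVecs F

/-- The group `G_q` of projectivities fixing the twisted cubic, modeled as those maps
on subspaces that are induced by an invertible matrix and map the cubic onto itself. -/
def Gq (F : Type) [Field F] :
    Set ((Submodule F (Fin 4 → F)) → (Submodule F (Fin 4 → F))) :=
  {f | (∃ A : GL (Fin 4) F, f = projAct F A) ∧ f '' twistedCubic F = twistedCubic F}

def isPoint (F : Type) [Field F] (W : Submodule F (Fin 4 → F)) : Prop :=
  Module.finrank F W = 1

def isLine (F : Type) [Field F] (W : Submodule F (Fin 4 → F)) : Prop :=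
  Module.finrank F W = 2

/-- The orbit of a line under `G_q`. -/
def lineOrbit (F : Type) [Field F] (ℓ : Submodule F (Fin 4 → F)) :
    Set (Submodule F (Fin 4 → F)) :=
  {m | ∃ f ∈ Gq F, f ℓ = m}

/-- The stabilizer of a line in `G_q`. -/
def lineStab (F : Type) [Field F] (ℓ : Submodule F (Fin 4 → F)) :
    Set ((Submodule F (Fin 4 → F)) → (Submodule F (Fin 4 → F))) :=
  {f ∈ Gq F | f ℓ = ℓ}

/-- The linear form `y ↦ c0 y0 + c1 y1 + c2 y2 + c3 y3` defining a plane. -/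
def planeForm (F : Type) [Field F] (c : Fin 4 → F) : (Fin 4 → F) →ₗ[F] F where
  toFun y := c 0 * y 0 + c 1 * y 1 + c 2 * y 2 + c 3 * y 3
  map_add' a b := by simp only [Pi.add_apply]; ring
  map_smul' r a := by simp only [Pi.smul_apply, smul_eq_mul, RingHom.id_apply]; ring

/-- The plane `π(c0,c1,c2,c3)`. -/
def planeOf (F : Type) [Field F] (c : Fin 4 → F) : Submodule F (Fin 4 → F) :=
  LinearMap.ker (planeForm F c)

/-- The null polarity `𝔄`: the polar subspace of `W` w.r.t. the bilinear form
sending a point `(x0:x1:x2:x3)` to the plane `π(x3, −3x2, 3x1, −x0)`. -/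
def nullPolarity (F : Type) [Field F] (W : Submodule F (Fin 4 → F)) :
    Submodule F (Fin 4 → F) :=
  ⨅ x ∈ (W : Set (Fin 4 → F)), planeOf F ![x 3, -(3 * x 2), 3 * x 1, -(x 0)]

/-- The tangent line to the twisted cubic at `P(t)`, `t ∈ F`. -/
def tangentAt (F : Type) [Field F] (t : F) : Submodule F (Fin 4 → F) :=
  Submodule.span F {![t ^ 3, t ^ 2, t, 1], ![3 * t ^ 2, 2 * t, 1, 0]}

/-- The tangent line to the twisted cubic at `P(∞)`. -/
def tangentAtInf (F : Type) [Field F] : Submodule F (Fin 4 → F) :=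
  Submodule.span F {![1, 0, 0, 0], ![0, 1, 0, 0]}

def isTangent (F : Type) [Field F] (ℓ : Submodule F (Fin 4 → F)) : Prop :=
  (∃ t : F, ℓ = tangentAt F t) ∨ ℓ = tangentAtInf F

/-- The osculating plane at `P(t)`, `t ∈ F`. -/
def oscPlane (F : Type) [Field F] (t : F) : Submodule F (Fin 4 → F) :=
  planeOf F ![1, -(3 * t), 3 * t ^ 2, -(t ^ 3)]

/-- The osculating plane at `P(∞)`. -/
def oscPlaneInf (F : Type) [Field F] : Submodule F (Fin 4 → F) :=
  planeOf F ![0, 0, 0, 1]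

def isOscPlane (F : Type) [Field F] (π : Submodule F (Fin 4 → F)) : Prop :=
  (∃ t : F, π = oscPlane F t) ∨ π = oscPlaneInf F

/-- A real chord: the line joining two distinct points of the twisted cubic. -/
def isRealChord (F : Type) [Field F] (ℓ : Submodule F (Fin 4 → F)) : Prop :=
  ∃ u ∈ cubicVecs F, ∃ v ∈ cubicVecs F,
    Submodule.span F {u} ≠ Submodule.span F {v} ∧ ℓ = Submodule.span F {u, v}

/-- A real axis: the intersection of two distinct osculating planes. -/
def isRealAxis (F : Type) [Field F] (ℓ : Submodule F (Fin 4 → F)) : Prop :=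
  ∃ π₁ π₂ : Submodule F (Fin 4 → F),
    isOscPlane F π₁ ∧ isOscPlane F π₂ ∧ π₁ ≠ π₂ ∧ ℓ = π₁ ⊓ π₂

/-- The `F_{q²}`-extension of a subspace of `F^4`. -/
def extendSub (F K : Type) [Field F] [Field K] [Algebra F K]
    (W : Submodule F (Fin 4 → F)) : Submodule K (Fin 4 → K) :=
  Submodule.span K ((fun v i => algebraMap F K (v i)) '' (W : Set (Fin 4 → F)))

/-- An external line: a line containing no point of the twisted cubic. -/
def isExternal (F : Type) [Field F] (ℓ : Submodule F (Fin 4 → F)) : Prop :=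
  isLine F ℓ ∧ ∀ P ∈ twistedCubic F, ¬ P ≤ ℓ

/-- An imaginary chord: a line disjoint from the cubic whose `F_{q²}`-extension joins a
pair of Frobenius-conjugate points `P(t)`, `P(t^q)` of the cubic over `F_{q²}`. -/
def isImagChord (F K : Type) [Field F] [Field K] [Algebra F K] (q : ℕ)
    (ℓ : Submodule F (Fin 4 → F)) : Prop :=
  isExternal F ℓ ∧
  ∃ t : K, t ∉ Set.range (algebraMap F K) ∧
    extendSub F K ℓ =
      Submodule.span K
        ({![t ^ 3, t ^ 2, t, 1], ![(t ^ q) ^ 3, (t ^ q) ^ 2, t ^ q, 1]} :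
          Set (Fin 4 → K))

/-- An imaginary axis: a line whose `F_{q²}`-extension is the intersection of a pair of
Frobenius-conjugate osculating planes `π_osc(t)`, `π_osc(t^q)` over `F_{q²}`. -/
def isImagAxis (F K : Type) [Field F] [Field K] [Algebra F K] (q : ℕ)
    (ℓ : Submodule F (Fin 4 → F)) : Prop :=
  isLine F ℓ ∧
  ∃ t : K, t ∉ Set.range (algebraMap F K) ∧
    extendSub F K ℓ =
      planeOf K ![1, -(3 * t), 3 * t ^ 2, -(t ^ 3)] ⊓
        planeOf K ![1, -(3 * t ^ q), 3 * (t ^ q) ^ 2, -((t ^ q) ^ 3)]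

/-- A unisecant: a line meeting the twisted cubic in exactly one point. -/
def isUnisecant (F : Type) [Field F] (ℓ : Submodule F (Fin 4 → F)) : Prop :=
  isLine F ℓ ∧ ∃! P, P ∈ twistedCubic F ∧ P ≤ ℓ

/-- A `UΓ`-line: a non-tangent unisecant lying in some osculating plane. -/
def isUGamma (F : Type) [Field F] (ℓ : Submodule F (Fin 4 → F)) : Prop :=
  isUnisecant F ℓ ∧ ¬ isTangent F ℓ ∧ ∃ π, isOscPlane F π ∧ ℓ ≤ π

/-- A `UnΓ`-line: a non-tangent unisecant lying in no osculating plane. -/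
def isUnGamma (F : Type) [Field F] (ℓ : Submodule F (Fin 4 → F)) : Prop :=
  isUnisecant F ℓ ∧ ¬ isTangent F ℓ ∧ ∀ π, isOscPlane F π → ¬ ℓ ≤ π

/-- An `EΓ`-line: an external line, other than an imaginary chord, lying in some
osculating plane. -/
def isEGamma (F K : Type) [Field F] [Field K] [Algebra F K] (q : ℕ)
    (ℓ : Submodule F (Fin 4 → F)) : Prop :=
  isExternal F ℓ ∧ ¬ isImagChord F K q ℓ ∧ ∃ π, isOscPlane F π ∧ ℓ ≤ π

/-- For `q ≡ 0 (mod 3)`: the axis of `Γ`, the line `x0 = x3 = 0`. -/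
def axisLine (F : Type) [Field F] : Submodule F (Fin 4 → F) :=
  Submodule.span F {![0, 1, 0, 0], ![0, 0, 1, 0]}

/-- For `q ≡ 0 (mod 3)`: an `EA`-line, i.e. an external line, other than an imaginary
chord and other than the axis of `Γ`, meeting the axis of `Γ`. -/
def isEA (F K : Type) [Field F] [Field K] [Algebra F K] (q : ℕ)
    (ℓ : Submodule F (Fin 4 → F)) : Prop :=
  isExternal F ℓ ∧ ¬ isImagChord F K q ℓ ∧ ℓ ≠ axisLine F ∧ ℓ ⊓ axisLine F ≠ ⊥

end

/-!
For `q ≥ 5` the group `G_q` is `PGL(2, q)` acting through the symmetric cube. Indeed, after moving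
two points of the cubic back to `P(∞)` and `P(0)`, the equations `x₁² = x₀x₂` and `x₂² = x₁x₃` of
the cubic pull back to polynomials of degree at most three in `t` vanishing at the `q - 1 ≥ 4`
nonzero elements of `F_q`, hence identically, and this forces the projectivity to be diagonal.

Both lines consist of the solutions of a recurrence `vᵢ = a vᵢ₊₁ + b vᵢ₊₂` whose characteristic
polynomial `X² - aX - b` has no root in `F_q`, so over `F_{q²}` they join `P(t)` and `P(t^q)` for
a root `t`. A matrix `M` stabilizes such a line exactly when `(t, 1) M` is proportional to `(t, 1)`
or to `(t^q, 1)`, that is, when `M` is multiplication by an element of `F_{q²}ˣ`, possibly followed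
by conjugation. Modulo `F_qˣ` this leaves `2 (q² - 1) / (q - 1) = 2 (q + 1)` projectivities.
-/

section Veronese

variable {R : Type*} [CommRing R]

/-- The binary cubic Veronese map `(x₀, x₁) ↦ (x₀³, x₀²x₁, x₀x₁², x₁³)`; its values at nonzero
vectors represent the points of the twisted cubic, with `P(t)` represented by the value at
`(t, 1)`. -/
def veronese (x : Fin 2 → R) : Fin 4 → R :=
  ![x 0 ^ 3, x 0 ^ 2 * x 1, x 0 * x 1 ^ 2, x 1 ^ 3]

/-- The symmetric cube of the right action of `2 × 2` matrices on row vectors, written in the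
coordinates of `veronese`. -/
def symCube : Matrix (Fin 2) (Fin 2) R →* Matrix (Fin 4) (Fin 4) R where
  toFun M :=
    !![M 0 0 ^ 3, M 0 0 ^ 2 * M 0 1, M 0 0 * M 0 1 ^ 2, M 0 1 ^ 3;
       3 * M 0 0 ^ 2 * M 1 0, M 0 0 ^ 2 * M 1 1 + 2 * M 0 0 * M 0 1 * M 1 0,
         2 * M 0 0 * M 0 1 * M 1 1 + M 0 1 ^ 2 * M 1 0, 3 * M 0 1 ^ 2 * M 1 1;
       3 * M 0 0 * M 1 0 ^ 2, 2 * M 0 0 * M 1 0 * M 1 1 + M 0 1 * M 1 0 ^ 2,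
         M 0 0 * M 1 1 ^ 2 + 2 * M 0 1 * M 1 0 * M 1 1, 3 * M 0 1 * M 1 1 ^ 2;
       M 1 0 ^ 3, M 1 0 ^ 2 * M 1 1, M 1 0 * M 1 1 ^ 2, M 1 1 ^ 3]
  map_one' := by
    ext i j
    fin_cases i <;> fin_cases j <;> simp
  map_mul' M N := by
    ext i j
    fin_cases i <;> fin_cases j <;>
      simp [Matrix.mul_apply, Fin.sum_univ_two, Fin.sum_univ_four] <;> ring

/-- The homomorphism from `GL₂` to `GL₄` induced by `symCube`. -/
def symCubeGL : GL (Fin 2) R →* GL (Fin 4) R :=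
  Units.map symCube

theorem coe_symCubeGL (M : GL (Fin 2) R) :
    (symCubeGL M : Matrix (Fin 4) (Fin 4) R) = symCube (M : Matrix (Fin 2) (Fin 2) R) :=
  rfl

theorem veronese_vecMul (x : Fin 2 → R) (M : Matrix (Fin 2) (Fin 2) R) :
    veronese (x ᵥ* M) = veronese x ᵥ* symCube M := by
  ext i
  fin_cases i <;>
    simp [veronese, symCube, Matrix.vecMul, dotProduct, Fin.sum_univ_two, Fin.sum_univ_four] <;>
    ring

theorem veronese_smul (c : R) (x : Fin 2 → R) : veronese (c • x) = c ^ 3 • veronese x := by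
  ext i
  fin_cases i <;> simp [veronese] <;> ring

theorem veronese_pair_one (t : R) : veronese ![t, 1] = ![t ^ 3, t ^ 2, t, 1] := by
  simp [veronese]

theorem veronese_single_zero : veronese (Pi.single 0 1 : Fin 2 → R) = Pi.single 0 1 := by
  ext i
  fin_cases i <;> simp [veronese]

theorem veronese_single_one : veronese (Pi.single 1 1 : Fin 2 → R) = Pi.single 3 1 := by
  ext i
  fin_cases i <;> simp [veronese]

theorem symCube_smul (c : R) (M : Matrix (Fin 2) (Fin 2) R) :
    symCube (c • M) = c ^ 3 • symCube M := by
  ext i j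
  fin_cases i <;> fin_cases j <;> simp [symCube] <;> ring

theorem symCube_diagonal (d : Fin 2 → R) :
    symCube (Matrix.diagonal d) = Matrix.diagonal (veronese d) := by
  ext i j
  fin_cases i <;> fin_cases j <;> simp [symCube, veronese]

theorem symCube_map {S : Type*} [CommRing S] (f : R →+* S) (M : Matrix (Fin 2) (Fin 2) R) :
    (symCube M).map f = symCube (M.map f) := by
  ext i j
  fin_cases i <;> fin_cases j <;> simp [symCube, map_ofNat]

variable {k : Type*} [Field k]

theorem span_eq_of_span_veronese_eq {x y : Fin 2 → k}
    (h : span k {veronese x} = span k {veronese y}) : span k {x} = span k {y} := by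
  obtain ⟨c, hc⟩ := span_singleton_eq_span_singleton.mp h
  have h0 : c * x 0 ^ 3 = y 0 ^ 3 := congrFun hc 0
  have h1 : c * (x 0 ^ 2 * x 1) = y 0 ^ 2 * y 1 := congrFun hc 1
  have h3 : c * x 1 ^ 3 = y 1 ^ 3 := congrFun hc 3
  rw [span_singleton_eq_span_singleton]
  by_cases hx0 : x 0 = 0
  · have hy0 : y 0 = 0 := by simpa [hx0] using h0.symm
    by_cases hx1 : x 1 = 0
    · have hy1 : y 1 = 0 := by simpa [hx1] using h3.symm
      exact ⟨1, by ext i; fin_cases i <;> simp [hx0, hx1, hy0, hy1]⟩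
    · have hy1 : y 1 ≠ 0 := fun hy1 => by simp [hy1, hx1] at h3
      refine ⟨Units.mk0 (y 1 / x 1) (div_ne_zero hy1 hx1), ?_⟩
      ext i
      fin_cases i <;> simp [Units.smul_def, hx0, hy0, hx1]
  · have hy0 : y 0 ≠ 0 := fun hy0 => by simp [hy0, hx0] at h0
    have hcross : x 0 * y 1 = y 0 * x 1 :=
      mul_left_cancel₀ (pow_ne_zero 2 hy0) (by linear_combination x 1 * h0 - x 0 * h1)
    refine ⟨Units.mk0 (y 0 / x 0) (div_ne_zero hy0 hx0), ?_⟩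
    ext i
    fin_cases i
    · simp [Units.smul_def, hx0]
    · simp only [Units.smul_def, Units.val_mk0, Pi.smul_apply, smul_eq_mul, Fin.mk_one]
      rw [div_mul_eq_mul_div, ← hcross, mul_div_cancel_left₀ _ hx0]

theorem span_veronese_eq_iff {x y : Fin 2 → k} :
    span k {veronese x} = span k {veronese y} ↔ span k {x} = span k {y} := by
  refine ⟨span_eq_of_span_veronese_eq, fun h => ?_⟩
  obtain ⟨c, rfl⟩ := span_singleton_eq_span_singleton.mp h
  exact span_singleton_eq_span_singleton.mpr ⟨c ^ 3, by simp [Units.smul_def, veronese_smul]⟩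

end Veronese

section Projectivities

variable {F : Type} [Field F]

theorem projAct_mul (A B : GL (Fin 4) F) (W : Submodule F (Fin 4 → F)) :
    projAct F (A * B) W = projAct F B (projAct F A W) := by
  simp only [projAct, ← Submodule.map_comp]
  congr 1
  ext v i
  simp [Matrix.mul_apply_eq_vecMul, Matrix.row]

theorem projAct_one (W : Submodule F (Fin 4 → F)) : projAct F 1 W = W := by
  have hid : vecMulLinear ((1 : GL (Fin 4) F) : Matrix (Fin 4) (Fin 4) F) = LinearMap.id := by
    ext v i
    simp
  rw [projAct, hid, Submodule.map_id]

theorem projAct_injective (A : GL (Fin 4) F) : Function.Injective (projAct F A) :=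
  Function.LeftInverse.injective (g := projAct F A⁻¹) fun W => by
    rw [← projAct_mul, mul_inv_cancel, projAct_one]

theorem projAct_span_singleton (A : GL (Fin 4) F) (v : Fin 4 → F) :
    projAct F A (span F {v}) = span F {v ᵥ* (A : Matrix (Fin 4) (Fin 4) F)} := by
  simp [projAct, Submodule.map_span]

theorem projAct_eq_of_coe_eq_smul {A B : GL (Fin 4) F} {c : F}
    (h : (A : Matrix (Fin 4) (Fin 4) F) = c • (B : Matrix (Fin 4) (Fin 4) F)) :
    projAct F A = projAct F B := by
  have hc : c ≠ 0 := by
    rintro rfl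
    simp at h
  funext W
  have hsmul : vecMulLinear (A : Matrix (Fin 4) (Fin 4) F) =
      c • vecMulLinear (B : Matrix (Fin 4) (Fin 4) F) := by
    ext v i
    simp [h]
  rw [projAct, projAct, hsmul, Submodule.map_smul _ _ _ hc]

theorem projAct_eq_self_iff (A : GL (Fin 4) F) (W : Submodule F (Fin 4 → F)) :
    projAct F A W = W ↔ ∀ v ∈ W, v ᵥ* (A : Matrix (Fin 4) (Fin 4) F) ∈ W := by
  constructor
  · intro h v hv
    rw [← h]
    exact Submodule.mem_map_of_mem hv
  · intro h
    have hinj : Function.Injective (vecMulLinear (A : Matrix (Fin 4) (Fin 4) F)) :=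
      Matrix.vecMul_injective_of_isUnit A.isUnit
    refine Submodule.eq_of_le_of_finrank_eq (Submodule.map_le_iff_le_comap.mpr h) ?_
    exact (Submodule.equivMapOfInjective _ hinj W).finrank_eq.symm

theorem mem_twistedCubic_iff {P : Submodule F (Fin 4 → F)} :
    P ∈ twistedCubic F ↔ ∃ x : Fin 2 → F, x ≠ 0 ∧ P = span F {veronese x} := by
  constructor
  · rintro ⟨v, ⟨t, rfl⟩ | rfl, rfl⟩
    · exact ⟨![t, 1], by simp, by rw [veronese_pair_one]⟩
    · exact ⟨![1, 0], by simp, by simp [veronese]⟩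
  · rintro ⟨x, hx, rfl⟩
    by_cases hx1 : x 1 = 0
    · have hx0 : x 0 ≠ 0 := fun hx0 => hx (by ext i; fin_cases i <;> assumption)
      refine ⟨veronese ![1, 0], Or.inr (by simp [veronese]), span_veronese_eq_iff.mpr ?_⟩
      exact span_singleton_eq_span_singleton.mpr
        ⟨Units.mk0 _ hx0, by ext i; fin_cases i <;> simp [Units.smul_def, hx1]⟩
    · refine ⟨_, Or.inl ⟨x 0 / x 1, veronese_pair_one _⟩, span_veronese_eq_iff.mpr ?_⟩
      exact span_singleton_eq_span_singleton.mpr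
        ⟨Units.mk0 _ hx1, by ext i; fin_cases i <;> simp [Units.smul_def, mul_div_cancel₀, hx1]⟩

end Projectivities

section TwistedCubicGroup

variable {F : Type} [Field F]

theorem projAct_symCubeGL_span_veronese (M : GL (Fin 2) F) (x : Fin 2 → F) :
    projAct F (symCubeGL M) (span F {veronese x}) =
      span F {veronese (x ᵥ* (M : Matrix (Fin 2) (Fin 2) F))} := by
  rw [projAct_span_singleton, coe_symCubeGL, veronese_vecMul]

theorem projAct_symCubeGL_mem_twistedCubic (M : GL (Fin 2) F) {P : Submodule F (Fin 4 → F)}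
    (hP : P ∈ twistedCubic F) : projAct F (symCubeGL M) P ∈ twistedCubic F := by
  obtain ⟨x, hx, rfl⟩ := mem_twistedCubic_iff.mp hP
  refine mem_twistedCubic_iff.mpr ⟨_, fun hxM => hx ?_, projAct_symCubeGL_span_veronese M x⟩
  exact Matrix.vecMul_injective_of_isUnit M.isUnit (hxM.trans (Matrix.zero_vecMul _).symm)

theorem projAct_symCubeGL_mem_Gq (M : GL (Fin 2) F) : projAct F (symCubeGL M) ∈ Gq F := by
  refine ⟨⟨_, rfl⟩, Set.Subset.antisymm ?_ fun P hP => ?_⟩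
  · rintro _ ⟨P, hP, rfl⟩
    exact projAct_symCubeGL_mem_twistedCubic M hP
  · refine ⟨_, projAct_symCubeGL_mem_twistedCubic M⁻¹ hP, ?_⟩
    rw [← projAct_mul, ← map_mul, inv_mul_cancel, map_one, projAct_one]

theorem quadrics_of_span_mem_twistedCubic {w : Fin 4 → F} (hw : span F {w} ∈ twistedCubic F) :
    w 1 ^ 2 = w 0 * w 2 ∧ w 2 ^ 2 = w 1 * w 3 := by
  obtain ⟨x, -, hwx⟩ := mem_twistedCubic_iff.mp hw
  obtain ⟨c, rfl⟩ := mem_span_singleton.mp (hwx ▸ mem_span_singleton_self w)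
  constructor <;> simp [veronese] <;> ring

theorem cubic_eq_zero_of_forall_eval_eq_zero [Fintype F] (hF : 5 ≤ Fintype.card F) {P : Cubic F}
    (hP : ∀ t : F, t ≠ 0 → P.toPoly.eval t = 0) : P = 0 := by
  classical
  refine (Cubic.toPoly_eq_zero_iff P).mp <|
    Polynomial.eq_zero_of_natDegree_lt_card_of_eval_eq_zero' _ (Finset.univ.erase 0)
      (fun t ht => hP t (Finset.ne_of_mem_erase ht)) ?_
  have hdeg : P.toPoly.natDegree ≤ 3 := Polynomial.natDegree_cubic_le
  rw [Finset.card_erase_of_mem (Finset.mem_univ _), Finset.card_univ]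
  omega

theorem coeffs_eq_of_forall_sq_eq_mul [Fintype F] (hF : 5 ≤ Fintype.card F)
    {a₂ a₁ a₀ b₁ b₀ c₁ c₀ : F}
    (h : ∀ t : F, t ≠ 0 →
      (b₁ * t + b₀) ^ 2 = (a₂ * t ^ 2 + a₁ * t + a₀) * (c₁ * t + c₀)) :
    a₂ * c₁ = 0 ∧ b₁ ^ 2 = a₂ * c₀ + a₁ * c₁ ∧ 2 * b₁ * b₀ = a₁ * c₀ + a₀ * c₁ ∧
      b₀ ^ 2 = a₀ * c₀ := by
  have hcubic := cubic_eq_zero_of_forall_eval_eq_zero hF (P := ⟨a₂ * c₁,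
    a₂ * c₀ + a₁ * c₁ - b₁ ^ 2, a₁ * c₀ + a₀ * c₁ - 2 * b₁ * b₀, a₀ * c₀ - b₀ ^ 2⟩)
    fun t ht => by
      simp only [Cubic.toPoly, Polynomial.eval_add, Polynomial.eval_mul, Polynomial.eval_C,
        Polynomial.eval_pow, Polynomial.eval_X]
      linear_combination -h t ht
  obtain ⟨h₃, h₂, h₁, h₀⟩ := Cubic.ext_iff.mp hcubic
  exact ⟨h₃, (sub_eq_zero.mp h₂).symm, (sub_eq_zero.mp h₁).symm, (sub_eq_zero.mp h₀).symm⟩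

theorem entries_of_maps_twistedCubic [Fintype F] (hF : 5 ≤ Fintype.card F) {B : GL (Fin 4) F}
    (hrow0 : ∀ j ≠ 0, B 0 j = 0) (hrow3 : ∀ j ≠ 3, B 3 j = 0)
    (hB : ∀ P ∈ twistedCubic F, projAct F B P ∈ twistedCubic F) :
    (B 0 0 * B 1 2 = 0 ∧ B 1 1 ^ 2 = B 0 0 * B 2 2 + B 1 0 * B 1 2 ∧
      2 * B 1 1 * B 2 1 = B 1 0 * B 2 2 + B 2 0 * B 1 2 ∧ B 2 1 ^ 2 = B 2 0 * B 2 2) ∧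
    (B 3 3 * B 2 1 = 0 ∧ B 2 2 ^ 2 = B 3 3 * B 1 1 + B 2 3 * B 2 1 ∧
      2 * B 2 2 * B 1 2 = B 2 3 * B 1 1 + B 1 3 * B 2 1 ∧ B 1 2 ^ 2 = B 1 3 * B 1 1) := by
  have hquadrics (x : Fin 2 → F) (hx : x ≠ 0) := quadrics_of_span_mem_twistedCubic <|
    projAct_span_singleton B (veronese x) ▸ hB _ (mem_twistedCubic_iff.mpr ⟨x, hx, rfl⟩)
  simp only [veronese, Matrix.vecMul, dotProduct, Fin.sum_univ_four, Matrix.cons_val,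
    hrow0 1 (by decide), hrow0 2 (by decide), hrow0 3 (by decide), hrow3 0 (by decide),
    hrow3 1 (by decide), hrow3 2 (by decide), mul_zero, zero_add, add_zero] at hquadrics
  constructor
  · refine coeffs_eq_of_forall_sq_eq_mul hF fun t ht => mul_left_cancel₀ (pow_ne_zero 2 ht) ?_
    have hquadric := (hquadrics ![t, 1] (by simp)).1
    simp only [Matrix.cons_val] at hquadric
    linear_combination hquadric
  · refine coeffs_eq_of_forall_sq_eq_mul hF fun t ht => mul_left_cancel₀ (pow_ne_zero 2 ht) ?_
    have hquadric := (hquadrics ![1, t] (by simp)).2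
    simp only [Matrix.cons_val] at hquadric
    linear_combination hquadric

theorem isDiag_of_maps_twistedCubic [Fintype F] (hF : 5 ≤ Fintype.card F) {B : GL (Fin 4) F}
    (hrow0 : ∀ j ≠ 0, B 0 j = 0) (hrow3 : ∀ j ≠ 3, B 3 j = 0)
    (hB : ∀ P ∈ twistedCubic F, projAct F B P ∈ twistedCubic F) :
    (B : Matrix (Fin 4) (Fin 4) F).IsDiag ∧ B 1 1 ^ 2 = B 0 0 * B 2 2 ∧
      B 2 2 ^ 2 = B 3 3 * B 1 1 := by
  obtain ⟨⟨h12, h11, h10, h20⟩, h21, h22, h23, h13⟩ :=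
    entries_of_maps_twistedCubic hF hrow0 hrow3 hB
  have hdet : (B : Matrix (Fin 4) (Fin 4) F).det ≠ 0 := B.det_ne_zero
  have hB00 : B 0 0 ≠ 0 := fun h => hdet <| Matrix.det_eq_zero_of_row_eq_zero 0 fun j => by
    by_cases hj : j = 0
    · exact hj ▸ h
    · exact hrow0 j hj
  have hB33 : B 3 3 ≠ 0 := fun h => hdet <| Matrix.det_eq_zero_of_row_eq_zero 3 fun j => by
    by_cases hj : j = 3
    · exact hj ▸ h
    · exact hrow3 j hj
  replace h12 : B 1 2 = 0 := by simpa [hB00] using h12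
  replace h21 : B 2 1 = 0 := by simpa [hB33] using h21
  have hB11 : B 1 1 ≠ 0 := fun h => hdet <| Matrix.det_eq_zero_of_column_eq_zero 1 fun i => by
    fin_cases i <;> first | assumption | exact hrow0 1 (by decide) | exact hrow3 1 (by decide)
  have hB22 : B 2 2 ≠ 0 := fun h => hdet <| Matrix.det_eq_zero_of_column_eq_zero 2 fun i => by
    fin_cases i <;> first | assumption | exact hrow0 2 (by decide) | exact hrow3 2 (by decide)
  replace h10 : B 1 0 = 0 := by simpa [h12, h21, hB22] using h10
  replace h20 : B 2 0 = 0 := by simpa [h21, hB22] using h20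
  replace h23 : B 2 3 = 0 := by simpa [h12, h21, hB11] using h23
  replace h13 : B 1 3 = 0 := by simpa [h12, hB11] using h13
  refine ⟨fun i j hij => ?_, by simpa [h12] using h11, by simpa [h21] using h22⟩
  fin_cases i <;> fin_cases j <;>
    first
    | exact absurd rfl hij
    | assumption
    | exact hrow0 _ (by decide)
    | exact hrow3 _ (by decide)

theorem apply_eq_zero_of_projAct_span_single {A : GL (Fin 4) F} {i j : Fin 4}
    (h : projAct F A (span F {Pi.single i 1}) = span F {Pi.single i 1}) (hj : j ≠ i) :
    A i j = 0 := by
  rw [projAct_span_singleton, single_one_vecMul] at h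
  obtain ⟨c, hc⟩ := mem_span_singleton.mp (h ▸ mem_span_singleton_self _)
  calc A i j = (c • Pi.single i 1 : Fin 4 → F) j := (congrFun hc j).symm
    _ = 0 := by rw [Pi.smul_apply, Pi.single_eq_of_ne hj, smul_zero]

theorem exists_projAct_eq_of_fixes_zero_infinity [Fintype F] (hF : 5 ≤ Fintype.card F)
    {B : GL (Fin 4) F} (hB : ∀ P ∈ twistedCubic F, projAct F B P ∈ twistedCubic F)
    (hinfty : projAct F B (span F {Pi.single 0 1}) = span F {Pi.single 0 1})
    (hzero : projAct F B (span F {Pi.single 3 1}) = span F {Pi.single 3 1}) :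
    ∃ M : GL (Fin 2) F, projAct F B = projAct F (symCubeGL M) := by
  obtain ⟨hdiag, h11, h22⟩ := isDiag_of_maps_twistedCubic hF
    (fun j hj => apply_eq_zero_of_projAct_span_single hinfty hj)
    (fun j hj => apply_eq_zero_of_projAct_span_single hzero hj) hB
  have hne (i : Fin 4) : B i i ≠ 0 := by
    have hdet : (B : Matrix (Fin 4) (Fin 4) F).det ≠ 0 := B.det_ne_zero
    rw [← hdiag.diagonal_diag, Matrix.det_diagonal] at hdet
    exact Finset.prod_ne_zero_iff.mp hdet i (Finset.mem_univ i)
  have hd : (Matrix.diagonal ![B 2 2, B 3 3]).det ≠ 0 := by simp [Matrix.det_diagonal, hne]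
  refine ⟨Matrix.GeneralLinearGroup.mkOfDetNeZero _ hd,
    projAct_eq_of_coe_eq_smul (c := (B 3 3 ^ 2)⁻¹) ?_⟩
  have h00 : B 0 0 * B 3 3 ^ 2 = B 2 2 ^ 3 := mul_right_cancel₀ (hne 2) <| by
    linear_combination -B 3 3 ^ 2 * h11 - (B 2 2 ^ 2 + B 3 3 * B 1 1) * h22
  have hdiagonal : Matrix.diag (B : Matrix (Fin 4) (Fin 4) F) =
      (B 3 3 ^ 2)⁻¹ • veronese ![B 2 2, B 3 3] := by
    rw [eq_inv_smul_iff₀ (pow_ne_zero 2 (hne 3))]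
    ext i
    fin_cases i
    · simpa [veronese, mul_comm] using h00
    · simpa [veronese] using by linear_combination -B 3 3 * h22
    · simpa [veronese] using mul_comm _ _
    · simpa [veronese] using (pow_succ (B 3 3) 2).symm
  calc (B : Matrix (Fin 4) (Fin 4) F) = Matrix.diagonal (Matrix.diag B.val) :=
        hdiag.diagonal_diag.symm
    _ = (B 3 3 ^ 2)⁻¹ • symCube (Matrix.diagonal ![B 2 2, B 3 3]) := by
        rw [hdiagonal, Matrix.diagonal_smul, symCube_diagonal]

theorem exists_projAct_eq_of_maps_twistedCubic [Fintype F] (hF : 5 ≤ Fintype.card F)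
    {A : GL (Fin 4) F} (hA : ∀ P ∈ twistedCubic F, projAct F A P ∈ twistedCubic F) :
    ∃ M : GL (Fin 2) F, projAct F A = projAct F (symCubeGL M) := by
  have himage (i : Fin 2) : ∃ x : Fin 2 → F, x ≠ 0 ∧
      projAct F A (span F {veronese (Pi.single i 1)}) = span F {veronese x} :=
    mem_twistedCubic_iff.mp <| hA _ (mem_twistedCubic_iff.mpr ⟨Pi.single i 1, by simp, rfl⟩)
  choose x hx0 hx using himage
  have hindep : LinearIndependent F x := by
    refine linearIndependent_fin2.mpr ⟨hx0 1, fun c hc => ?_⟩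
    have hc0 : c ≠ 0 := fun h => hx0 0 (by rw [← hc, h, zero_smul])
    have hspan : span F {x 0} = span F {x 1} := by
      rw [← hc, span_singleton_smul_eq hc0.isUnit]
    rw [← span_veronese_eq_iff, ← hx, ← hx, (projAct_injective A).eq_iff, span_veronese_eq_iff,
      span_singleton_eq_span_singleton] at hspan
    obtain ⟨u, hu⟩ := hspan
    simpa using congrFun hu 1
  obtain ⟨N, hN⟩ : IsUnit (Matrix.of x) := Matrix.linearIndependent_rows_iff_isUnit.mp hindep
  have hfix (i : Fin 2) : projAct F (A * symCubeGL N⁻¹) (span F {veronese (Pi.single i 1)}) =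
      span F {veronese (Pi.single i 1)} := by
    have hNi : projAct F (symCubeGL N) (span F {veronese (Pi.single i 1)}) =
        span F {veronese (x i)} := by
      rw [projAct_symCubeGL_span_veronese, hN, single_one_vecMul]
      rfl
    rw [projAct_mul, hx, ← hNi, ← projAct_mul, ← map_mul, mul_inv_cancel, map_one, projAct_one]
  obtain ⟨M, hM⟩ := exists_projAct_eq_of_fixes_zero_infinity hF (B := A * symCubeGL N⁻¹)
    (fun P hP => by rw [projAct_mul]; exact projAct_symCubeGL_mem_twistedCubic _ (hA P hP))
    (veronese_single_zero (R := F) ▸ hfix 0) (veronese_single_one (R := F) ▸ hfix 1)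
  refine ⟨M * N, funext fun W => ?_⟩
  rw [map_mul, projAct_mul, ← hM, ← projAct_mul, mul_assoc, ← map_mul, inv_mul_cancel, map_one,
    mul_one]

theorem Gq_eq_range [Fintype F] (hF : 5 ≤ Fintype.card F) :
    Gq F = Set.range fun M : GL (Fin 2) F => projAct F (symCubeGL M) := by
  refine Set.Subset.antisymm ?_ (Set.range_subset_iff.mpr projAct_symCubeGL_mem_Gq)
  rintro _ ⟨⟨A, rfl⟩, hA⟩
  obtain ⟨M, hM⟩ := exists_projAct_eq_of_maps_twistedCubic hF fun P hP =>
    hA ▸ Set.mem_image_of_mem (projAct F A) hP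
  exact ⟨M, hM.symm⟩

theorem exists_coe_eq_smul_of_projAct_symCubeGL_eq {M N : GL (Fin 2) F}
    (h : projAct F (symCubeGL M) = projAct F (symCubeGL N)) :
    ∃ c : F, (M : Matrix (Fin 2) (Fin 2) F) = c • (N : Matrix (Fin 2) (Fin 2) F) := by
  have hfix (x : Fin 2 → F) :
      span F {x ᵥ* ((M * N⁻¹ : GL (Fin 2) F) : Matrix (Fin 2) (Fin 2) F)} = span F {x} := by
    rw [← span_veronese_eq_iff, ← projAct_symCubeGL_span_veronese, map_mul, projAct_mul, h,
      ← projAct_mul, ← map_mul, mul_inv_cancel, map_one, projAct_one]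
  have hdep (x : Fin 2 → F) : ¬ LinearIndependent F
      ![x, vecMulLinear ((M * N⁻¹ : GL (Fin 2) F) : Matrix (Fin 2) (Fin 2) F) x] := by
    by_cases hx : x = 0
    · simp [hx, linearIndependent_fin2]
    · rw [LinearIndependent.pair_iff' hx, not_forall_not]
      exact mem_span_singleton.mp (hfix x ▸ mem_span_singleton_self _)
  obtain ⟨c, hc⟩ := LinearMap.exists_eq_smul_id_of_forall_notLinearIndependent hdep
  refine ⟨c, ?_⟩
  have hscalar : ((M * N⁻¹ : GL (Fin 2) F) : Matrix (Fin 2) (Fin 2) F) = c • 1 := by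
    ext i j
    simpa [Matrix.one_apply, Pi.single_apply, eq_comm] using
      congrFun (LinearMap.congr_fun hc (Pi.single i 1)) j
  calc (M : Matrix (Fin 2) (Fin 2) F)
      = ((M * N⁻¹ : GL (Fin 2) F) : Matrix (Fin 2) (Fin 2) F) * N := by
        rw [← Units.val_mul, inv_mul_cancel_right]
    _ = c • (N : Matrix (Fin 2) (Fin 2) F) := by rw [hscalar, smul_mul_assoc, one_mul]

end TwistedCubicGroup

section FiniteField

variable {F : Type*} [Field F] {K : Type*} [Field K] [Algebra F K]

theorem mem_range_algebraMap_of_pow_card_eq_self [Fintype F] {t : K} (ht : t ^ Fintype.card F = t) :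
    t ∈ Set.range (algebraMap F K) := by
  have hmem : t ∈ (Polynomial.X ^ Fintype.card F - Polynomial.X : Polynomial K).roots := by
    rw [Polynomial.mem_roots (FiniteField.X_pow_card_sub_X_ne_zero K Fintype.one_lt_card)]
    simp [ht]
  have hroots := (Polynomial.splits_X_pow_nat_card_sub_X (K := F)).roots_map (algebraMap F K)
  rw [Nat.card_eq_fintype_card, FiniteField.roots_X_pow_card_sub_X, Polynomial.map_sub,
    Polynomial.map_pow, Polynomial.map_X] at hroots
  obtain ⟨x, -, hx⟩ := Multiset.mem_map.mp (hroots ▸ hmem)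
  exact ⟨x, hx⟩

theorem pow_card_eq_sub_of_sq_eq [Fintype F] {a b : F} {t : K} (ht : t ∉ Set.range (algebraMap F K))
    (hroot : t ^ 2 = algebraMap F K a * t + algebraMap F K b) :
    t ^ Fintype.card F = algebraMap F K a - t := by
  have hfrob := congrArg (FiniteField.frobeniusAlgHom F K) hroot
  simp only [map_add, map_mul, map_pow, AlgHom.commutes, FiniteField.coe_frobeniusAlgHom] at hfrob
  have hprod : (t ^ Fintype.card F - t) * (t ^ Fintype.card F - (algebraMap F K a - t)) = 0 := by
    linear_combination hfrob - hroot
  refine sub_eq_zero.mp ((mul_eq_zero.mp hprod).resolve_left fun h => ht ?_)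
  exact mem_range_algebraMap_of_pow_card_eq_self (sub_eq_zero.mp h)

theorem exists_aeval_eq_zero_of_natDegree_dvd_finrank [Finite K] {f : Polynomial F}
    (hf : Irreducible f) (hdvd : f.natDegree ∣ Module.finrank F K) :
    ∃ t : K, Polynomial.aeval t f = 0 := by
  have := Fact.mk hf
  have : Finite F := Finite.of_injective _ (algebraMap F K).injective
  have : FiniteDimensional F (AdjoinRoot f) := (AdjoinRoot.powerBasis hf.ne_zero).finite
  have : Finite (AdjoinRoot f) := Module.finite_of_finite F
  obtain ⟨φ⟩ := FiniteField.nonempty_algHom_of_finrank_dvd (F := F) (K := AdjoinRoot f) (L := K)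
    (by rwa [(AdjoinRoot.powerBasis hf.ne_zero).finrank, AdjoinRoot.powerBasis_dim])
  exact ⟨φ (AdjoinRoot.root f), by
    rw [Polynomial.aeval_algHom_apply, AdjoinRoot.aeval_eq, AdjoinRoot.mk_self, map_zero]⟩

theorem exists_sq_eq_mul_add [Finite K] (hK : Module.finrank F K = 2) {a b : F}
    (hab : ∀ x : F, x ^ 2 ≠ a * x + b) :
    ∃ t : K, t ∉ Set.range (algebraMap F K) ∧
      t ^ 2 = algebraMap F K a * t + algebraMap F K b := by
  let f : Polynomial F := Polynomial.X ^ 2 - (Polynomial.C a * Polynomial.X + Polynomial.C b)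
  have hdeg : f.natDegree = 2 := by
    simp only [f]
    compute_degree!
  have hirr : Irreducible f :=
    Polynomial.irreducible_of_degree_le_three_of_not_isRoot (by simp [hdeg]) fun x hx =>
      hab x (sub_eq_zero.mp (by simpa [f] using hx))
  obtain ⟨t, ht⟩ := exists_aeval_eq_zero_of_natDegree_dvd_finrank (K := K) hirr (by rw [hdeg, hK])
  have hroot : t ^ 2 = algebraMap F K a * t + algebraMap F K b :=
    sub_eq_zero.mp (by simpa [f] using ht)
  refine ⟨t, ?_, hroot⟩
  rintro ⟨x, rfl⟩
  exact hab x ((algebraMap F K).injective (by simpa using hroot))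

end FiniteField

section ChordLine

variable {k : Type*} [Field k]

/-- The line of `PG(3, k)` of all quadruples satisfying the linear recurrence
`vᵢ = a vᵢ₊₁ + b vᵢ₊₂`; it joins the points `P(s)` and `P(t)` of the twisted cubic, where `s`, `t`
are the roots of `X² - aX - b`, possibly in an extension of `k`. -/
def chordLine (a b : k) : Submodule k (Fin 4 → k) :=
  span k {![a ^ 2 + b, a, 1, 0], ![a * b, b, 0, 1]}

theorem mem_chordLine_iff {a b : k} {v : Fin 4 → k} :
    v ∈ chordLine a b ↔ v 0 = a * v 1 + b * v 2 ∧ v 1 = a * v 2 + b * v 3 := by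
  rw [chordLine, mem_span_pair]
  constructor
  · rintro ⟨c, d, rfl⟩
    constructor <;> simp <;> ring
  · rintro ⟨h0, h1⟩
    refine ⟨v 2, v 3, ?_⟩
    ext i
    fin_cases i <;> simp [h0, h1] <;> ring

theorem finrank_chordLine (a b : k) : Module.finrank k (chordLine a b) = 2 := by
  have hindep : LinearIndependent k ![![a ^ 2 + b, a, 1, 0], ![a * b, b, 0, 1]] := by
    refine LinearIndependent.pair_iff.mpr fun c d h => ⟨?_, ?_⟩
    · simpa using congrFun h 2
    · simpa using congrFun h 3
  have hfinrank := finrank_span_eq_card hindep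
  rwa [Matrix.range_cons_cons_empty, Fintype.card_fin] at hfinrank

theorem chordLine_eq_span_veronese {s t : k} (hst : s ≠ t) :
    chordLine (s + t) (-(s * t)) = span k {veronese ![s, 1], veronese ![t, 1]} := by
  have hst' : s - t ≠ 0 := sub_ne_zero.mpr hst
  refine le_antisymm (fun v hv => ?_) (span_le.mpr ?_)
  · obtain ⟨h0, h1⟩ := mem_chordLine_iff.mp hv
    refine mem_span_pair.mpr ⟨(v 2 - t * v 3) / (s - t), (s * v 3 - v 2) / (s - t), ?_⟩
    ext i
    fin_cases i <;> simp [veronese, h0, h1] <;> field_simp <;> ring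
  · rintro _ (rfl | rfl) <;>
      exact mem_chordLine_iff.mpr ⟨by simp [veronese]; ring, by simp [veronese]; ring⟩

theorem sq_ne_of_ne_zero {a b : k} (hab : ∀ x : k, x ^ 2 ≠ a * x + b) {x : Fin 2 → k}
    (hx : x ≠ 0) : x 0 ^ 2 ≠ a * x 0 * x 1 + b * x 1 ^ 2 := by
  intro h
  by_cases hx1 : x 1 = 0
  · have hx0 : x 0 = 0 := by simpa [hx1] using h
    exact hx (by ext i; fin_cases i <;> assumption)
  · refine hab (x 0 / x 1) ?_
    field_simp
    linear_combination h

theorem veronese_mem_chordLine_iff {a b : k} {x : Fin 2 → k} (hx : x ≠ 0) :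
    veronese x ∈ chordLine a b ↔ x 0 ^ 2 = a * x 0 * x 1 + b * x 1 ^ 2 := by
  rw [mem_chordLine_iff]
  constructor
  · rintro ⟨h0, h1⟩
    simp only [veronese, Matrix.cons_val] at h0 h1
    have hfactor0 : x 0 * (x 0 ^ 2 - (a * x 0 * x 1 + b * x 1 ^ 2)) = 0 := by
      linear_combination h0
    have hfactor1 : x 1 * (x 0 ^ 2 - (a * x 0 * x 1 + b * x 1 ^ 2)) = 0 := by
      linear_combination h1
    by_contra h
    have hne := sub_ne_zero.mpr h
    refine hx ?_
    ext i
    fin_cases i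
    · exact (mul_eq_zero.mp hfactor0).resolve_right hne
    · exact (mul_eq_zero.mp hfactor1).resolve_right hne
  · intro h
    exact ⟨by simpa [veronese] using by linear_combination x 0 * h,
      by simpa [veronese] using by linear_combination x 1 * h⟩

end ChordLine

section ImaginaryChord

variable {F K : Type} [Field F] [Field K] [Algebra F K]

theorem isExternal_chordLine {a b : F} (hab : ∀ x : F, x ^ 2 ≠ a * x + b) :
    isExternal F (chordLine a b) := by
  refine ⟨finrank_chordLine a b, fun P hP hle => ?_⟩
  obtain ⟨x, hx, rfl⟩ := mem_twistedCubic_iff.mp hP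
  exact sq_ne_of_ne_zero hab hx <|
    (veronese_mem_chordLine_iff hx).mp (hle (mem_span_singleton_self _))

theorem extendSub_span (s : Set (Fin 4 → F)) :
    extendSub F K (span F s) = span K ((fun v i => algebraMap F K (v i)) '' s) := by
  let φ : (Fin 4 → F) →ₗ[F] Fin 4 → K := (Algebra.linearMap F K).compLeft (Fin 4)
  change span K (φ '' span F s) = span K (φ '' s)
  rw [← Submodule.map_coe, Submodule.map_span, span_span_of_tower]

theorem extendSub_chordLine (a b : F) :
    extendSub F K (chordLine a b) = chordLine (algebraMap F K a) (algebraMap F K b) := by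
  rw [chordLine, extendSub_span, Set.image_pair, chordLine]
  congr 2 <;> simp [funext_iff, Fin.forall_fin_succ]

theorem isImagChord_chordLine [Fintype F] [Finite K] (hK : Module.finrank F K = 2) {a b : F}
    (hab : ∀ x : F, x ^ 2 ≠ a * x + b) :
    isImagChord F K (Fintype.card F) (chordLine a b) := by
  obtain ⟨t, ht, hroot⟩ := exists_sq_eq_mul_add hK hab
  have hconj := pow_card_eq_sub_of_sq_eq ht hroot
  refine ⟨isExternal_chordLine hab, t, ht, ?_⟩
  have hne : t ≠ t ^ Fintype.card F := fun h => ht (mem_range_algebraMap_of_pow_card_eq_self h.symm)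
  have ha : algebraMap F K a = t + t ^ Fintype.card F := by rw [hconj]; ring
  have hb : algebraMap F K b = -(t * t ^ Fintype.card F) := by
    rw [hconj]
    linear_combination -hroot
  rw [extendSub_chordLine, ha, hb, chordLine_eq_span_veronese hne, veronese_pair_one,
    veronese_pair_one]

end ImaginaryChord

section ChordStabilizer

variable {k : Type*} [Field k]

/-- The matrix of multiplication by `y = t * w 0 + w 1` in the `k`-algebra generated by a root `t`
of `X² - aX - b`: its right action sends the row vector `(t, 1)` to `y • (t, 1)`. -/
def mulMatrix (a b : k) (w : Fin 2 → k) : Matrix (Fin 2) (Fin 2) k :=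
  !![a * w 0 + w 1, w 0; b * w 0, w 1]

/-- The matrix sending `(t, 1)` to `(a - t, 1)`, i.e. interchanging the two roots `t` and `a - t`
of `X² - aX - b`. -/
def conjMatrix (a : k) : Matrix (Fin 2) (Fin 2) k :=
  !![-1, 0; a, 1]

/-- The matrices whose symmetric cubes stabilize `chordLine a b`: the multiplications, followed by
the conjugation if `e` holds. -/
def chordMatrix (a b : k) (e : Bool) (w : Fin 2 → k) : Matrix (Fin 2) (Fin 2) k :=
  mulMatrix a b w * cond e (conjMatrix a) 1

theorem chordMatrix_smul (a b c : k) (e : Bool) (w : Fin 2 → k) :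
    chordMatrix a b e (c • w) = c • chordMatrix a b e w := by
  have hmul : mulMatrix a b (c • w) = c • mulMatrix a b w := by
    ext i j
    fin_cases i <;> fin_cases j <;> simp [mulMatrix] <;> ring
  rw [chordMatrix, hmul, smul_mul_assoc, chordMatrix]

theorem col_one_chordMatrix (a b : k) (e : Bool) (w : Fin 2 → k) :
    (chordMatrix a b e w).col 1 = w := by
  ext i
  cases e <;> fin_cases i <;> simp [chordMatrix, mulMatrix, conjMatrix]

theorem det_mulMatrix_ne_zero {a b : k} (hab : ∀ x : k, x ^ 2 ≠ a * x + b) {w : Fin 2 → k}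
    (hw : w ≠ 0) : (mulMatrix a b w).det ≠ 0 := by
  have hne : ![-w 1, w 0] ≠ 0 := fun h => hw <| by
    ext i
    fin_cases i
    · simpa using congrFun h 1
    · simpa using congrFun h 0
  intro h
  refine sq_ne_of_ne_zero hab hne ?_
  simp only [mulMatrix, Matrix.det_fin_two_of] at h
  simp only [Matrix.cons_val]
  linear_combination h

theorem det_chordMatrix_ne_zero {a b : k} (hab : ∀ x : k, x ^ 2 ≠ a * x + b) (e : Bool)
    {w : Fin 2 → k} (hw : w ≠ 0) : (chordMatrix a b e w).det ≠ 0 := by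
  rw [chordMatrix, Matrix.det_mul]
  refine mul_ne_zero (det_mulMatrix_ne_zero hab hw) ?_
  cases e <;> simp [conjMatrix]

theorem conjMatrix_ne_one [Finite k] {a b : k} (hab : ∀ x : k, x ^ 2 ≠ a * x + b) :
    conjMatrix a ≠ 1 := by
  intro h
  have hneg : (-1 : k) = 1 := by simpa [conjMatrix] using congrFun₂ h 0 0
  have ha : a = 0 := by simpa [conjMatrix] using congrFun₂ h 1 0
  have hchar : CharP k 2 :=
    CharTwo.of_one_ne_zero_of_two_eq_zero one_ne_zero (by linear_combination -hneg)
  obtain ⟨x, hx⟩ := isSquare_of_charTwo' b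
  exact hab x (by rw [ha, hx]; ring)

theorem chordMatrix_injective [Finite k] {a b : k} (hab : ∀ x : k, x ^ 2 ≠ a * x + b)
    {w : Fin 2 → k} (hw : w ≠ 0) : Function.Injective fun e => chordMatrix a b e w := by
  have hne : chordMatrix a b true w ≠ chordMatrix a b false w := fun h =>
    conjMatrix_ne_one hab <|
      ((Matrix.isUnit_iff_isUnit_det _).mpr (det_mulMatrix_ne_zero hab hw).isUnit).mul_left_cancel h
  rintro (_ | _) (_ | _) h
  exacts [rfl, absurd h.symm hne, absurd h hne, rfl]

theorem vecMul_symCube_mulMatrix_mem_chordLine {a b : k} (w : Fin 2 → k) {v : Fin 4 → k}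
    (hv : v ∈ chordLine a b) : v ᵥ* symCube (mulMatrix a b w) ∈ chordLine a b := by
  obtain ⟨h0, h1⟩ := mem_chordLine_iff.mp hv
  rw [h1] at h0
  refine mem_chordLine_iff.mpr ⟨?_, ?_⟩ <;>
    simp [symCube, mulMatrix, Matrix.vecMul, dotProduct, Fin.sum_univ_four, h0, h1] <;> ring

theorem vecMul_symCube_conjMatrix_mem_chordLine {a b : k} {v : Fin 4 → k}
    (hv : v ∈ chordLine a b) : v ᵥ* symCube (conjMatrix a) ∈ chordLine a b := by
  obtain ⟨h0, h1⟩ := mem_chordLine_iff.mp hv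
  rw [h1] at h0
  refine mem_chordLine_iff.mpr ⟨?_, ?_⟩ <;>
    simp [symCube, conjMatrix, Matrix.vecMul, dotProduct, Fin.sum_univ_four, h0, h1] <;> ring

theorem vecMul_symCube_chordMatrix_mem_chordLine {a b : k} (e : Bool) (w : Fin 2 → k)
    {v : Fin 4 → k} (hv : v ∈ chordLine a b) :
    v ᵥ* symCube (chordMatrix a b e w) ∈ chordLine a b := by
  have hmul := vecMul_symCube_mulMatrix_mem_chordLine w hv
  rw [chordMatrix, map_mul, ← Matrix.vecMul_vecMul]
  cases e
  · simpa using hmul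
  · exact vecMul_symCube_conjMatrix_mem_chordLine hmul

variable {F K : Type} [Field F] [Field K] [Algebra F K]

theorem vecMul_map_mem_extendSub {A : Matrix (Fin 4) (Fin 4) F} {W : Submodule F (Fin 4 → F)}
    (hA : ∀ v ∈ W, v ᵥ* A ∈ W) {v : Fin 4 → K} (hv : v ∈ extendSub F K W) :
    v ᵥ* A.map (algebraMap F K) ∈ extendSub F K W := by
  suffices h : extendSub F K W ≤
      (extendSub F K W).comap (vecMulLinear (A.map (algebraMap F K))) from h hv
  refine span_le.mpr ?_
  rintro _ ⟨u, hu, rfl⟩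
  refine subset_span ⟨u ᵥ* A, hA u hu, ?_⟩
  ext i
  exact RingHom.map_vecMul (algebraMap F K) A u i

theorem eq_and_eq_of_mul_add_eq_mul_add {t : K} (ht : t ∉ Set.range (algebraMap F K))
    {u v u' v' : F}
    (h : t * algebraMap F K u + algebraMap F K v = t * algebraMap F K u' + algebraMap F K v') :
    u = u' ∧ v = v' := by
  have hu : u = u' := by
    by_contra hne
    have hne' : algebraMap F K u - algebraMap F K u' ≠ 0 :=
      sub_ne_zero.mpr ((algebraMap F K).injective.ne hne)
    refine ht ⟨(v' - v) / (u - u'), ?_⟩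
    rw [map_div₀, map_sub, map_sub, div_eq_iff hne']
    linear_combination -h
  subst hu
  exact ⟨rfl, (algebraMap F K).injective (add_left_cancel h)⟩

theorem pair_vecMul_map_apply (t : K) (M : Matrix (Fin 2) (Fin 2) F) (j : Fin 2) :
    (![t, 1] ᵥ* M.map (algebraMap F K)) j =
      t * algebraMap F K (M 0 j) + algebraMap F K (M 1 j) := by
  simp [Matrix.vecMul, dotProduct, Fin.sum_univ_two]

theorem pair_vecMul_map_injective {t : K} (ht : t ∉ Set.range (algebraMap F K)) :
    Function.Injective fun M : Matrix (Fin 2) (Fin 2) F =>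
      ![t, 1] ᵥ* M.map (algebraMap F K) := by
  intro M N h
  have hcol (j : Fin 2) : M 0 j = N 0 j ∧ M 1 j = N 1 j :=
    eq_and_eq_of_mul_add_eq_mul_add ht <| by
      simpa only [pair_vecMul_map_apply] using congrFun h j
  ext i j
  fin_cases i
  exacts [(hcol j).1, (hcol j).2]

theorem pair_vecMul_map_mulMatrix {a b : F} {t : K}
    (hroot : t ^ 2 = algebraMap F K a * t + algebraMap F K b) (w : Fin 2 → F) :
    ![t, 1] ᵥ* (mulMatrix a b w).map (algebraMap F K) =
      (t * algebraMap F K (w 0) + algebraMap F K (w 1)) • ![t, 1] := by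
  ext i
  fin_cases i
  · simpa [mulMatrix, Matrix.vecMul, dotProduct, Fin.sum_univ_two] using by
      linear_combination -algebraMap F K (w 0) * hroot
  · simp [mulMatrix, Matrix.vecMul, dotProduct, Fin.sum_univ_two]

theorem pair_vecMul_map_conjMatrix (a : F) (t : K) :
    ![t, 1] ᵥ* (conjMatrix a).map (algebraMap F K) = ![algebraMap F K a - t, 1] := by
  ext i
  fin_cases i <;>
    simp [conjMatrix, Matrix.vecMul, dotProduct, Fin.sum_univ_two, neg_add_eq_sub]

theorem pair_vecMul_map_chordMatrix {a b : F} {t : K}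
    (hroot : t ^ 2 = algebraMap F K a * t + algebraMap F K b) (e : Bool) (w : Fin 2 → F) :
    ![t, 1] ᵥ* (chordMatrix a b e w).map (algebraMap F K) =
      (t * algebraMap F K (w 0) + algebraMap F K (w 1)) •
        ![cond e (algebraMap F K a - t) t, 1] := by
  rw [chordMatrix, Matrix.map_mul, ← Matrix.vecMul_vecMul, pair_vecMul_map_mulMatrix hroot,
    Matrix.smul_vecMul]
  cases e
  · simp
  · rw [cond_true, pair_vecMul_map_conjMatrix, cond_true]

theorem veronese_pair_vecMul_map_mem_chordLine {a b : F} {t : K}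
    (hroot : t ^ 2 = algebraMap F K a * t + algebraMap F K b) {M : Matrix (Fin 2) (Fin 2) F}
    (hM : ∀ v ∈ chordLine a b, v ᵥ* symCube M ∈ chordLine a b) :
    veronese (![t, 1] ᵥ* M.map (algebraMap F K)) ∈
      chordLine (algebraMap F K a) (algebraMap F K b) := by
  rw [veronese_vecMul, ← symCube_map, ← extendSub_chordLine]
  refine vecMul_map_mem_extendSub hM ?_
  rw [extendSub_chordLine, veronese_mem_chordLine_iff (by simp)]
  simpa using hroot

theorem exists_eq_chordMatrix {a b : F} {t : K} (ht : t ∉ Set.range (algebraMap F K))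
    (hroot : t ^ 2 = algebraMap F K a * t + algebraMap F K b) {M : Matrix (Fin 2) (Fin 2) F}
    (hM0 : M ≠ 0) (hM : ∀ v ∈ chordLine a b, v ᵥ* symCube M ∈ chordLine a b) :
    ∃ e, M = chordMatrix a b e (M.col 1) := by
  set x := ![t, 1] ᵥ* M.map (algebraMap F K) with hx
  have hx0 : x ≠ 0 := fun h => hM0 <| pair_vecMul_map_injective ht (h.trans (by simp))
  have hquadratic := (veronese_mem_chordLine_iff hx0).mp
    (veronese_pair_vecMul_map_mem_chordLine hroot hM)
  have hfactor : (x 0 - t * x 1) * (x 0 - (algebraMap F K a - t) * x 1) = 0 := by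
    linear_combination hquadratic - x 1 ^ 2 * hroot
  obtain ⟨e, he⟩ : ∃ e, x 0 = cond e (algebraMap F K a - t) t * x 1 :=
    (mul_eq_zero.mp hfactor).elim (fun h => ⟨false, sub_eq_zero.mp h⟩)
      fun h => ⟨true, sub_eq_zero.mp h⟩
  refine ⟨e, pair_vecMul_map_injective ht ?_⟩
  calc x = x 1 • ![cond e (algebraMap F K a - t) t, 1] := by
        ext i
        fin_cases i
        · simpa [mul_comm] using he
        · simp
    _ = ![t, 1] ᵥ* (chordMatrix a b e (M.col 1)).map (algebraMap F K) := by
        rw [pair_vecMul_map_chordMatrix hroot, hx, pair_vecMul_map_apply]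
        rfl

/-- The invertible `chordMatrix` attached to a chosen representative of a point of the projective
line; up to a scalar it does not depend on the choice. -/
noncomputable def chordGL {a b : F} (hab : ∀ x : F, x ^ 2 ≠ a * x + b)
    (p : Bool × Projectivization F (Fin 2 → F)) : GL (Fin 2) F :=
  Matrix.GeneralLinearGroup.mkOfDetNeZero (chordMatrix a b p.1 p.2.rep)
    (det_chordMatrix_ne_zero hab p.1 p.2.rep_nonzero)

theorem projAct_symCubeGL_chordGL_injective [Finite F] {a b : F}
    (hab : ∀ x : F, x ^ 2 ≠ a * x + b) :
    Function.Injective fun p => projAct F (symCubeGL (chordGL hab p)) := by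
  rintro ⟨e, p⟩ ⟨e', p'⟩ h
  obtain ⟨c, hc⟩ := exists_coe_eq_smul_of_projAct_symCubeGL_eq h
  replace hc : chordMatrix a b e p.rep = chordMatrix a b e' (c • p'.rep) :=
    hc.trans (chordMatrix_smul ..).symm
  have hrep : p.rep = c • p'.rep := by
    simpa only [col_one_chordMatrix] using congrArg (fun M => M.col 1) hc
  have hp : p = p' := by
    rw [← p.mk_rep, ← p'.mk_rep, Projectivization.mk_eq_mk_iff']
    exact ⟨c, hrep.symm⟩
  rw [← hrep] at hc
  rw [hp, chordMatrix_injective hab p.rep_nonzero hc]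

theorem lineStab_chordLine_eq_range [Fintype F] (hF : 5 ≤ Fintype.card F) [Finite K]
    (hK : Module.finrank F K = 2) {a b : F} (hab : ∀ x : F, x ^ 2 ≠ a * x + b) :
    lineStab F (chordLine a b) = Set.range fun p => projAct F (symCubeGL (chordGL hab p)) := by
  refine Set.Subset.antisymm ?_ ?_
  · rintro f ⟨hf, hfix⟩
    obtain ⟨M, rfl⟩ := Gq_eq_range hF ▸ hf
    obtain ⟨t, ht, hroot⟩ := exists_sq_eq_mul_add hK hab
    obtain ⟨e, he⟩ := exists_eq_chordMatrix ht hroot M.ne_zero ((projAct_eq_self_iff _ _).mp hfix)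
    have hw : M.val.col 1 ≠ 0 := fun h =>
      M.det_ne_zero (Matrix.det_eq_zero_of_column_eq_zero 1 (congrFun h))
    obtain ⟨c, hc⟩ := Projectivization.exists_smul_eq_mk_rep F _ hw
    have hcoe : (chordGL hab (e, .mk F _ hw)).val = (c : F) • M.val :=
      calc chordMatrix a b e (Projectivization.mk F _ hw).rep
          = (c : F) • chordMatrix a b e (M.val.col 1) := by rw [← hc, ← chordMatrix_smul]; rfl
        _ = (c : F) • M.val := by rw [← he]
    refine ⟨(e, .mk F _ hw), projAct_eq_of_coe_eq_smul (c := (c : F) ^ 3) ?_⟩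
    rw [coe_symCubeGL, coe_symCubeGL, hcoe, symCube_smul]
  · rintro _ ⟨p, rfl⟩
    exact ⟨projAct_symCubeGL_mem_Gq _, (projAct_eq_self_iff _ _).mpr fun v hv =>
      vecMul_symCube_chordMatrix_mem_chordLine _ _ hv⟩

theorem ncard_lineStab_chordLine [Fintype F] (hF : 5 ≤ Fintype.card F) [Finite K]
    (hK : Module.finrank F K = 2) {a b : F} (hab : ∀ x : F, x ^ 2 ≠ a * x + b) :
    (lineStab F (chordLine a b)).ncard = 2 * (Fintype.card F + 1) := by
  rw [lineStab_chordLine_eq_range hF hK hab,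
    Set.ncard_range_of_injective (projAct_symCubeGL_chordGL_injective hab), Nat.card_prod,
    Projectivization.card_of_finrank_two F _ (by simp), Nat.card_eq_fintype_card,
    Nat.card_eq_fintype_card, Fintype.card_bool]

end ChordStabilizer

section SpecialChords

variable {F : Type*} [Field F]

theorem span_pair_eq_chordLine_inv {ρ : F} (hρ : ρ ≠ 0) :
    span F {![1, 0, ρ, 0], ![0, 1, 0, ρ]} = chordLine 0 ρ⁻¹ := by
  refine le_antisymm (span_le.mpr ?_) fun v hv => ?_
  · rintro _ (rfl | rfl) <;> exact mem_chordLine_iff.mpr (by simp [hρ])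
  · obtain ⟨h0, h1⟩ := mem_chordLine_iff.mp hv
    refine mem_span_pair.mpr ⟨v 0, v 1, ?_⟩
    ext i
    fin_cases i <;> simp [h0, h1] <;> field_simp

theorem span_pair_eq_chordLine_one (η : F) :
    span F {![η + 1, 1, 1, 0], ![η, η, 0, 1]} = chordLine 1 η := by
  rw [chordLine, one_pow, one_mul, add_comm]

theorem sq_ne_zero_mul_add_inv {ρ : F} (hρ : ¬ ∃ s : F, s ^ 2 = ρ) (x : F) :
    x ^ 2 ≠ 0 * x + ρ⁻¹ := fun hx => hρ ⟨x⁻¹, by rw [inv_pow, hx, zero_mul, zero_add, inv_inv]⟩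

theorem charP_two_of_card_eq_two_pow [Fintype F] {h : ℕ} (hF : Fintype.card F = 2 ^ h) :
    CharP F 2 := by
  have h2h : (2 : F) ^ h = 0 := by exact_mod_cast hF ▸ Nat.cast_card_eq_zero F
  exact CharTwo.of_one_ne_zero_of_two_eq_zero one_ne_zero (eq_zero_of_pow_eq_zero h2h)

theorem sq_ne_one_mul_add_of_trace_eq_one [Fintype F] {h : ℕ} (hF : Fintype.card F = 2 ^ h)
    {η : F} (hη : ∑ i ∈ Finset.range h, η ^ 2 ^ i = 1) (x : F) : x ^ 2 ≠ 1 * x + η := by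
  intro hx
  have := charP_two_of_card_eq_two_pow hF
  have hη' : η = x ^ 2 - x := by linear_combination -hx
  have htrace : ∑ i ∈ Finset.range h, η ^ 2 ^ i = 0 :=
    calc ∑ i ∈ Finset.range h, η ^ 2 ^ i
        = ∑ i ∈ Finset.range h, (x ^ 2 ^ (i + 1) - x ^ 2 ^ i) := by
          refine Finset.sum_congr rfl fun i _ => ?_
          rw [hη', sub_pow_char_pow, ← pow_mul, pow_succ' 2 i]
      _ = x ^ Fintype.card F - x := by
          rw [Finset.sum_range_sub (fun i => x ^ 2 ^ i), hF, pow_zero, pow_one]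
      _ = 0 := by rw [FiniteField.pow_card, sub_self]
  exact one_ne_zero (hη.symm.trans htrace)

end SpecialChords

theorem finrank_eq_of_card_eq_pow {F K : Type*} [Field F] [Fintype F] [Field K] [Fintype K]
    [Algebra F K] {n : ℕ} (h : Fintype.card K = Fintype.card F ^ n) : Module.finrank F K = n :=
  Nat.pow_right_injective Fintype.one_lt_card (Module.card_eq_pow_finrank.symm.trans h)

theorem stmt_7 (q : ℕ) (F : Type) [Field F] [Fintype F]
    (hcard : Fintype.card F = q) (K : Type) [Field K] [Fintype K] [Algebra F K] (hcardK : Fintype.card K = q ^ 2) (hq : 5 ≤ q) :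
    (∀ ρ : F, Odd q → (¬ ∃ s : F, s ^ 2 = ρ) →
      isImagChord F K q (Submodule.span F ({![1, 0, ρ, 0], ![0, 1, 0, ρ]} : Set (Fin 4 → F))) ∧
      (lineStab F (Submodule.span F ({![1, 0, ρ, 0], ![0, 1, 0, ρ]} : Set (Fin 4 → F)))).ncard = 2 * (q + 1)) ∧
    (∀ (h : ℕ) (η : F), q = 2 ^ h → (∑ i ∈ Finset.range h, η ^ 2 ^ i) = 1 →
      isImagChord F K q (Submodule.span F ({![η + 1, 1, 1, 0], ![η, η, 0, 1]} : Set (Fin 4 → F))) ∧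
      (lineStab F (Submodule.span F ({![η + 1, 1, 1, 0], ![η, η, 0, 1]} : Set (Fin 4 → F)))).ncard = 2 * (q + 1)) := by
  subst hcard
  have hK : Module.finrank F K = 2 := finrank_eq_of_card_eq_pow hcardK
  refine ⟨fun ρ _ hρ => ?_, fun h η hF hη => ?_⟩
  · have hρ0 : ρ ≠ 0 := fun h0 => hρ ⟨0, by simp [h0]⟩
    have hroot := sq_ne_zero_mul_add_inv hρ
    rw [span_pair_eq_chordLine_inv hρ0]
    exact ⟨isImagChord_chordLine hK hroot, ncard_lineStab_chordLine hq hK hroot⟩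
  · have hroot := sq_ne_one_mul_add_of_trace_eq_one hF hη
    rw [span_pair_eq_chordLine_one]
    exact ⟨isImagChord_chordLine hK hroot, ncard_lineStab_chordLine hq hK hroot⟩
end

section
/- Let q ≢ 0 (mod 3) be a prime power with q ≥ 5. The imaginary axes of the osculating developable Γ of the twisted cubic C form a single orbit of lines under G_q, and the stabilizer in G_q of any imaginary axis has order 2(q+1). Moreover, if q is odd and ρ ∈ F_q is a non-square, the line through (0:1:0:−3ρ) and (−3/ρ:0:1:0) is an imaginary axis; if q is even and η ∈ F_q has absolute trace 1, the line through (η:1:1:0) and (η:η+1:0:1) is an imaginary axis. -/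
open Matrix Submodule

/-!
Up to scalars, `GL₂(F)` acts on `PG(3, q)` through the symmetric cube, and for `q ≥ 5` this action
gives all of `G_q`: after composing with an element of the image we may assume that `P(∞)` and
`P(0)` are fixed, and comparing coefficients in the two quadrics `x₁² = x₀x₂`, `x₂² = x₁x₃` through
the cubic forces the matrix to be a multiple of the symmetric cube of a diagonal matrix.

An imaginary axis is the kernel of the `F`-linear map `F⁴ → K` given by the coefficients of an
osculating plane whose homogeneous parameter `u = (u₀, u₁)` is an `F`-basis of `K`. The group
`GL₂(F)` acts simply transitively on such bases, so the imaginary axes form one orbit. Two bases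
give the same axis if and only if they agree up to a factor in `Kˣ` and conjugation; hence
`2(q² - 1)` elements of `GL₂(F)` fix a given axis, and dividing by the `q - 1` scalars leaves
`2(q + 1)` projectivities.
-/

namespace TwistedCubic

open Cardinal

section SymmetricCube

variable {R S : Type*} [CommRing R] [CommRing S]

/-- The cubic Veronese map, parametrizing the cone over the twisted cubic by homogeneous
coordinates: `P(t)` is spanned by `cubicVec ![t, 1]` and `P(∞)` by `cubicVec ![1, 0]`. -/
def cubicVec (x : Fin 2 → R) : Fin 4 → R :=
  ![x 0 ^ 3, x 0 ^ 2 * x 1, x 0 * x 1 ^ 2, x 1 ^ 3]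

/-- The coefficients of the osculating plane at the point spanned by `cubicVec x`. -/
def oscCoeffs (x : Fin 2 → R) : Fin 4 → R :=
  ![x 1 ^ 3, -(3 * x 0 * x 1 ^ 2), 3 * x 0 ^ 2 * x 1, -(x 0 ^ 3)]

/-- Three times the symmetric product `xyz` in the symmetric cube of `R²`, in the coordinates where
`cubicVec x` is the cube `x³`; the factor `3` avoids denominators. -/
def symProd (x y z : Fin 2 → R) : Fin 4 → R :=
  ![3 * x 0 * y 0 * z 0,
    x 0 * y 0 * z 1 + x 0 * y 1 * z 0 + x 1 * y 0 * z 0,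
    x 0 * y 1 * z 1 + x 1 * y 0 * z 1 + x 1 * y 1 * z 0,
    3 * x 1 * y 1 * z 1]

/-- The symmetric cube of a `2 × 2` matrix. As matrices act on row vectors, its columns hold the
coefficients of the expansion of `cubicVec (x ᵥ* g)` in the entries of `cubicVec x`. -/
def symCube : Matrix (Fin 2) (Fin 2) R →* Matrix (Fin 4) (Fin 4) R where
  toFun g :=
    let a := g 0 0
    let b := g 0 1
    let c := g 1 0
    let d := g 1 1
    !![a ^ 3, a ^ 2 * b, a * b ^ 2, b ^ 3;
      3 * a ^ 2 * c, a ^ 2 * d + 2 * a * b * c, 2 * a * b * d + b ^ 2 * c, 3 * b ^ 2 * d;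
      3 * a * c ^ 2, 2 * a * c * d + b * c ^ 2, a * d ^ 2 + 2 * b * c * d, 3 * b * d ^ 2;
      c ^ 3, c ^ 2 * d, c * d ^ 2, d ^ 3]
  map_one' := by
    ext i j
    fin_cases i <;> fin_cases j <;> simp
  map_mul' g h := by
    ext i j
    fin_cases i <;> fin_cases j <;>
      simp [Matrix.mul_apply, Fin.sum_univ_two, Fin.sum_univ_four] <;> ring

theorem cubicVec_vecMul_symCube (x : Fin 2 → R) (g : Matrix (Fin 2) (Fin 2) R) :
    cubicVec x ᵥ* symCube g = cubicVec (x ᵥ* g) := by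
  ext i
  fin_cases i <;>
    simp [cubicVec, symCube, vecMul, dotProduct, Fin.sum_univ_two, Fin.sum_univ_four] <;> ring

theorem oscCoeffs_dotProduct (x : Fin 2 → R) (v : Fin 4 → R) :
    oscCoeffs x ⬝ᵥ v =
      x 1 ^ 3 * v 0 - 3 * x 0 * x 1 ^ 2 * v 1 + 3 * x 0 ^ 2 * x 1 * v 2 - x 0 ^ 3 * v 3 := by
  simp [oscCoeffs, dotProduct, Fin.sum_univ_four, ← sub_eq_add_neg]

theorem oscCoeffs_vecMul_dotProduct (x : Fin 2 → R) (v : Fin 4 → R)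
    (g : Matrix (Fin 2) (Fin 2) R) :
    oscCoeffs (x ᵥ* g) ⬝ᵥ (v ᵥ* symCube g) = g.det ^ 3 * (oscCoeffs x ⬝ᵥ v) := by
  simp only [oscCoeffs_dotProduct, det_fin_two]
  simp only [symCube, MonoidHom.coe_mk, OneHom.coe_mk, vecMul, dotProduct, Fin.sum_univ_two,
    Fin.sum_univ_four, of_apply, cons_val]
  ring

theorem oscCoeffs_dotProduct_cubicVec (w x : Fin 2 → R) :
    oscCoeffs w ⬝ᵥ cubicVec x = (x 0 * w 1 - x 1 * w 0) ^ 3 := by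
  simp only [oscCoeffs_dotProduct, cubicVec, cons_val]
  ring

theorem oscCoeffs_dotProduct_symProd (w x y z : Fin 2 → R) :
    oscCoeffs w ⬝ᵥ symProd x y z =
      3 * (x 0 * w 1 - x 1 * w 0) * (y 0 * w 1 - y 1 * w 0) * (z 0 * w 1 - z 1 * w 0) := by
  simp only [oscCoeffs_dotProduct, symProd, cons_val]
  ring

theorem cubicVec_smul (c : R) (x : Fin 2 → R) : cubicVec (c • x) = c ^ 3 • cubicVec x := by
  ext i
  fin_cases i <;> simp [cubicVec] <;> ring

theorem oscCoeffs_smul (c : R) (x : Fin 2 → R) : oscCoeffs (c • x) = c ^ 3 • oscCoeffs x := by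
  ext i
  fin_cases i <;> simp [oscCoeffs] <;> ring

theorem symCube_smul (c : R) (g : Matrix (Fin 2) (Fin 2) R) :
    symCube (c • g) = c ^ 3 • symCube g := by
  ext i j
  fin_cases i <;> fin_cases j <;> simp [symCube] <;> ring

theorem symCube_map (φ : R →+* S) (g : Matrix (Fin 2) (Fin 2) R) :
    symCube (g.map φ) = (symCube g).map φ := by
  have h2 : φ 2 = 2 := map_ofNat φ 2
  have h3 : φ 3 = 3 := map_ofNat φ 3
  ext i j
  fin_cases i <;> fin_cases j <;> simp [symCube, h2, h3]

theorem oscCoeffs_map (φ : R →+* S) (x : Fin 2 → R) : oscCoeffs (φ ∘ x) = φ ∘ oscCoeffs x := by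
  have h3 : φ 3 = 3 := map_ofNat φ 3
  ext i
  fin_cases i <;> simp [oscCoeffs, h3]

end SymmetricCube

section Projectivity

variable {F : Type} [Field F]

theorem linearIndependent_pair_iff_det_ne_zero {k : Type*} [Field k] {x y : Fin 2 → k} :
    LinearIndependent k ![x, y] ↔ x 0 * y 1 - x 1 * y 0 ≠ 0 := by
  rw [← isUnit_iff_ne_zero, ← det_fin_two_of, ← isUnit_iff_isUnit_det,
    ← linearIndependent_rows_iff_isUnit]
  congr! 1
  ext i j
  fin_cases i <;> fin_cases j <;> rfl

theorem exists_smul_eq_of_not_linearIndependent {k V : Type*} [Field k] [AddCommGroup V]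
    [Module k V] {x y : V} (hx : x ≠ 0) (hy : y ≠ 0) (h : ¬ LinearIndependent k ![x, y]) :
    ∃ c : kˣ, c • x = y := by
  rw [LinearIndependent.pair_iff' hx] at h
  push Not at h
  obtain ⟨c, rfl⟩ := h
  exact ⟨Units.mk0 c (left_ne_zero_of_smul hy), rfl⟩

theorem span_cubicVec_smul (c : Fˣ) (x : Fin 2 → F) :
    span F {cubicVec (c • x)} = span F {cubicVec x} := by
  rw [Units.smul_def, cubicVec_smul]
  exact span_singleton_smul_eq (c.isUnit.pow 3) _

-- The osculating plane at a point meets the cubic only there.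
theorem span_cubicVec_eq_iff {x y : Fin 2 → F} (hx : x ≠ 0) (hy : y ≠ 0) :
    span F {cubicVec x} = span F {cubicVec y} ↔ ¬ LinearIndependent F ![x, y] := by
  constructor
  · intro h
    obtain ⟨c, hc⟩ := mem_span_singleton.1 (h ▸ mem_span_singleton_self (cubicVec x))
    have hosc : (x 0 * y 1 - x 1 * y 0) ^ 3 = 0 := by
      rw [← oscCoeffs_dotProduct_cubicVec, ← hc, dotProduct_smul, oscCoeffs_dotProduct_cubicVec,
        mul_comm (y 0), sub_self, zero_pow three_ne_zero, smul_zero]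
    rw [linearIndependent_pair_iff_det_ne_zero, not_not]
    exact eq_zero_of_pow_eq_zero hosc
  · intro h
    obtain ⟨c, rfl⟩ := exists_smul_eq_of_not_linearIndependent hx hy h
    rw [span_cubicVec_smul]

theorem mem_twistedCubic_iff {W : Submodule F (Fin 4 → F)} :
    W ∈ twistedCubic F ↔ ∃ x : Fin 2 → F, x ≠ 0 ∧ W = span F {cubicVec x} := by
  constructor
  · rintro ⟨_, ⟨t, rfl⟩ | rfl, rfl⟩
    · exact ⟨![t, 1], by simp, by simp [cubicVec]⟩
    · exact ⟨![1, 0], by simp, by simp [cubicVec]⟩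
  · rintro ⟨x, hx, rfl⟩
    by_cases h1 : x 1 = 0
    · refine ⟨_, Or.inr rfl, ?_⟩
      have h := (span_cubicVec_eq_iff (x := ![1, 0]) (by simp) hx).2
        (by simp [linearIndependent_pair_iff_det_ne_zero, h1])
      simpa [cubicVec] using h
    · refine ⟨_, Or.inl ⟨x 0 / x 1, rfl⟩, ?_⟩
      have h := (span_cubicVec_eq_iff (x := ![x 0 / x 1, 1]) (by simp) hx).2
        (by simp [linearIndependent_pair_iff_det_ne_zero, h1])
      simpa [cubicVec] using h

theorem quadrics_of_mem_twistedCubic {v : Fin 4 → F} (hv : span F {v} ∈ twistedCubic F) :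
    v 1 ^ 2 = v 0 * v 2 ∧ v 2 ^ 2 = v 1 * v 3 := by
  obtain ⟨x, -, hx⟩ := mem_twistedCubic_iff.1 hv
  obtain ⟨c, rfl⟩ := mem_span_singleton.1 (hx ▸ mem_span_singleton_self v)
  constructor <;> simp [cubicVec] <;> ring

theorem projAct_span_singleton (A : GL (Fin 4) F) (v : Fin 4 → F) :
    projAct F A (span F {v}) = span F {v ᵥ* A.1} := by
  simp [projAct, map_span]

theorem projAct_mul (A B : GL (Fin 4) F) : projAct F (A * B) = projAct F B ∘ projAct F A := by
  funext W
  simp only [projAct, Function.comp_apply, ← Submodule.map_comp, Units.val_mul]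
  congr 1
  exact LinearMap.ext fun v => (vecMul_vecMul v _ _).symm

theorem projAct_eq_of_smul {A B : GL (Fin 4) F} {c : F} (hc : c ≠ 0) (h : A.1 = c • B.1) :
    projAct F A = projAct F B := by
  funext W
  have hAB : vecMulLinear A.1 = c • vecMulLinear B.1 := by
    ext v
    simp [h]
  rw [projAct, projAct, hAB, Submodule.map_smul _ _ _ hc]

theorem projAct_injective (A : GL (Fin 4) F) : Function.Injective (projAct F A) :=
  map_injective_of_injective (vecMul_injective_of_isUnit A.isUnit)

/-- The projectivity of `PG(3,q)` that acts on the twisted cubic as `g` acts on the projective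
line. -/
def cubicProj (g : GL (Fin 2) F) : Submodule F (Fin 4 → F) → Submodule F (Fin 4 → F) :=
  projAct F (Units.map symCube g)

theorem cubicProj_span_cubicVec (g : GL (Fin 2) F) (x : Fin 2 → F) :
    cubicProj g (span F {cubicVec x}) = span F {cubicVec (x ᵥ* g.1)} := by
  rw [cubicProj, projAct_span_singleton, Units.coe_map, cubicVec_vecMul_symCube]

theorem vecMul_ne_zero_of_GL {n : Type*} [Fintype n] [DecidableEq n] {x : n → F} (hx : x ≠ 0)
    (g : GL n F) : x ᵥ* g.1 ≠ 0 := fun h =>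
  hx (vecMul_injective_of_isUnit g.isUnit (h.trans (zero_vecMul _).symm))

theorem cubicProj_mem_Gq (g : GL (Fin 2) F) : cubicProj g ∈ Gq F := by
  refine ⟨⟨_, rfl⟩, Set.Subset.antisymm ?_ fun W hW => ?_⟩
  · rintro _ ⟨W, hW, rfl⟩
    obtain ⟨x, hx, rfl⟩ := mem_twistedCubic_iff.1 hW
    rw [cubicProj_span_cubicVec]
    exact mem_twistedCubic_iff.2 ⟨_, vecMul_ne_zero_of_GL hx g, rfl⟩
  · obtain ⟨x, hx, rfl⟩ := mem_twistedCubic_iff.1 hW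
    refine ⟨_, mem_twistedCubic_iff.2 ⟨_, vecMul_ne_zero_of_GL hx g⁻¹, rfl⟩, ?_⟩
    rw [cubicProj_span_cubicVec, vecMul_vecMul, Units.inv_mul, vecMul_one]

theorem exists_smul_eq_of_not_linearIndependent_vecMul {g h : GL (Fin 2) F}
    (hgh : ∀ x, ¬ LinearIndependent F ![x ᵥ* g.1, x ᵥ* h.1]) : ∃ c : Fˣ, c • g = h := by
  obtain ⟨c, hc⟩ := LinearMap.exists_eq_smul_id_of_forall_notLinearIndependent
    (f := vecMulLinear (g⁻¹ * h).1) fun y => by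
      simpa [vecMul_vecMul] using hgh (y ᵥ* g⁻¹.1)
  have hsmul : (g⁻¹ * h).1 = c • 1 := by
    ext i j
    simpa [Matrix.one_apply, Pi.single_apply, eq_comm] using
      congrFun (LinearMap.congr_fun hc (Pi.single i 1)) j
  have hc0 : c ≠ 0 := by
    rintro rfl
    exact (g⁻¹ * h).ne_zero (by simpa using hsmul)
  refine ⟨Units.mk0 c hc0, Units.ext ?_⟩
  calc c • g.1 = g.1 * (c • 1) := by rw [mul_smul_comm, mul_one]
    _ = h.1 := by rw [← hsmul, ← Units.val_mul, mul_inv_cancel_left]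

theorem cubicProj_eq_iff {g h : GL (Fin 2) F} :
    cubicProj g = cubicProj h ↔ ∃ c : Fˣ, c • g = h := by
  constructor
  · refine fun hgh => exists_smul_eq_of_not_linearIndependent_vecMul fun x => ?_
    by_cases hx : x = 0
    · exact fun hli => hli.ne_zero 0 (by simp [hx])
    · rw [← span_cubicVec_eq_iff (vecMul_ne_zero_of_GL hx g) (vecMul_ne_zero_of_GL hx h),
        ← cubicProj_span_cubicVec, ← cubicProj_span_cubicVec, hgh]
  · rintro ⟨c, rfl⟩
    exact (projAct_eq_of_smul (pow_ne_zero 3 c.ne_zero) (symCube_smul c.1 g.1)).symm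

end Projectivity

section ProjectivityGroup

variable {F : Type} [Field F]

theorem cubic_eq_zero_of_eval_eq_zero (hF : 4 < #F) (P : Cubic F)
    (hP : ∀ t ≠ 0, P.toPoly.eval t = 0) : P = 0 := by
  have hdeg : (Polynomial.X * P.toPoly).natDegree ≤ 4 := by
    unfold Cubic.toPoly
    compute_degree
  have hX : Polynomial.X * P.toPoly = 0 := by
    refine Polynomial.eq_zero_of_forall_eval_zero_of_natDegree_lt_card _ (fun t => ?_)
      ((Nat.cast_le.2 hdeg).trans_lt hF)
    rcases eq_or_ne t 0 with rfl | ht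
    · simp
    · simp [hP t ht]
  exact (Cubic.toPoly_eq_zero_iff P).1 ((mul_eq_zero.1 hX).resolve_left Polynomial.X_ne_zero)

theorem coeffs_of_sq_linear_eq_quadratic_mul_linear (hF : 4 < #F) {α a₀ b₀ a₁ b₁ a₂ b₂ : F}
    (h : ∀ t ≠ 0, (a₁ * t + b₁) ^ 2 = (α * t ^ 2 + a₀ * t + b₀) * (a₂ * t + b₂)) :
    α * a₂ = 0 ∧ a₁ ^ 2 = α * b₂ + a₀ * a₂ ∧ 2 * a₁ * b₁ = a₀ * b₂ + b₀ * a₂ ∧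
      b₁ ^ 2 = b₀ * b₂ := by
  have hP := cubic_eq_zero_of_eval_eq_zero hF
    ⟨-(α * a₂), a₁ ^ 2 - (α * b₂ + a₀ * a₂), 2 * a₁ * b₁ - (a₀ * b₂ + b₀ * a₂),
      b₁ ^ 2 - b₀ * b₂⟩ fun t ht => by
    simp only [Cubic.toPoly, Polynomial.eval_add, Polynomial.eval_mul, Polynomial.eval_C,
      Polynomial.eval_pow, Polynomial.eval_X]
    linear_combination h t ht
  obtain ⟨h3, h2, h1, h0⟩ := Cubic.ext_iff.1 hP
  exact ⟨neg_eq_zero.1 h3, sub_eq_zero.1 h2, sub_eq_zero.1 h1, sub_eq_zero.1 h0⟩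

theorem coeffs_of_quadrics (hF : 4 < #F) {α δ : F} {a b : Fin 4 → F} (hα : α ≠ 0) (hδ : δ ≠ 0)
    (hab : a 1 ≠ 0 ∨ b 1 ≠ 0)
    (hquad₁ : ∀ t ≠ 0, (a 1 * t ^ 2 + b 1 * t) ^ 2 =
      (α * t ^ 3 + a 0 * t ^ 2 + b 0 * t) * (a 2 * t ^ 2 + b 2 * t))
    (hquad₂ : ∀ t ≠ 0, (a 2 * t ^ 2 + b 2 * t) ^ 2 =
      (a 1 * t ^ 2 + b 1 * t) * (a 3 * t ^ 2 + b 3 * t + δ)) :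
    ∃ β, α = β ^ 3 / δ ^ 2 ∧ a = Pi.single 1 (β ^ 2 / δ) ∧ b = Pi.single 2 β := by
  obtain ⟨ha2, ha1, hb0a0, hb1b0⟩ : α * a 2 = 0 ∧ a 1 ^ 2 = α * b 2 + a 0 * a 2 ∧
      2 * a 1 * b 1 = a 0 * b 2 + b 0 * a 2 ∧ b 1 ^ 2 = b 0 * b 2 := by
    refine coeffs_of_sq_linear_eq_quadratic_mul_linear hF fun t ht => ?_
    refine mul_left_cancel₀ (pow_ne_zero 2 ht) ?_
    linear_combination hquad₁ t ht
  obtain ⟨hb1, hb2, ha3b3, ha2a3⟩ : δ * b 1 = 0 ∧ b 2 ^ 2 = δ * a 1 + b 3 * b 1 ∧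
      2 * b 2 * a 2 = b 3 * a 1 + a 3 * b 1 ∧ a 2 ^ 2 = a 3 * a 1 := by
    refine coeffs_of_sq_linear_eq_quadratic_mul_linear hF fun t ht => ?_
    have h := hquad₂ t⁻¹ (inv_ne_zero ht)
    field_simp at h
    linear_combination h
  replace ha2 : a 2 = 0 := (mul_eq_zero.1 ha2).resolve_left hα
  replace hb1 : b 1 = 0 := (mul_eq_zero.1 hb1).resolve_left hδ
  have ha1_ne : a 1 ≠ 0 := hab.resolve_right (not_not.2 hb1)
  simp only [ha2, hb1, mul_zero, add_zero, zero_pow two_ne_zero, zero_eq_mul]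
    at ha1 hb2 hb0a0 hb1b0 ha3b3 ha2a3
  have hb2_ne : b 2 ≠ 0 := fun h => by simp [h, ha1_ne] at ha1
  have ha1_eq : a 1 = b 2 ^ 2 / δ := by rw [hb2, mul_div_cancel_left₀ _ hδ]
  refine ⟨b 2, ?_, ?_, ?_⟩
  · rw [ha1_eq] at ha1
    field_simp at ha1 ⊢
    linear_combination -ha1
  · ext i
    fin_cases i <;>
      simp [ha2, ha1_eq, hb0a0.resolve_right hb2_ne, ha2a3.resolve_right ha1_ne]
  · ext i
    fin_cases i <;>
      simp [hb1, hb1b0.resolve_right hb2_ne, ha3b3.resolve_right ha1_ne]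

theorem cubicVec_vecMul_apply (t : F) (A : Matrix (Fin 4) (Fin 4) F) (j : Fin 4) :
    (cubicVec ![t, 1] ᵥ* A) j = A 0 j * t ^ 3 + A 1 j * t ^ 2 + A 2 j * t + A 3 j := by
  simp [cubicVec, vecMul, dotProduct, Fin.sum_univ_four, mul_comm]

theorem exists_eq_smul_symCube_diagonal (hF : 4 < #F) {A : Matrix (Fin 4) (Fin 4) F}
    (hA : A.det ≠ 0) {α δ : F} (hα : A.row 0 = Pi.single 0 α) (hδ : A.row 3 = Pi.single 3 δ)
    (hquad : ∀ t ≠ 0, ∀ v, cubicVec ![t, 1] ᵥ* A = v →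
      v 1 ^ 2 = v 0 * v 2 ∧ v 2 ^ 2 = v 1 * v 3) :
    ∃ c m : Fˣ, A = c.1 • symCube (diagonal ![m.1, 1]) := by
  have hα0 : α ≠ 0 := by
    rintro rfl
    exact hA (det_eq_zero_of_row_eq_zero 0 fun j => by simpa using congrFun hα j)
  have hδ0 : δ ≠ 0 := by
    rintro rfl
    exact hA (det_eq_zero_of_row_eq_zero 3 fun j => by simpa using congrFun hδ j)
  simp only [funext_iff, row_apply] at hα hδ
  have hcol : A.row 1 1 ≠ 0 ∨ A.row 2 1 ≠ 0 := by
    by_contra! h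
    simp only [row_apply] at h
    exact hA (det_eq_zero_of_column_eq_zero 1 fun i => by fin_cases i <;> simp [hα, hδ, h])
  obtain ⟨β, hβ, ha, hb⟩ := coeffs_of_quadrics hF hα0 hδ0 hcol
    (fun t ht => by simpa [cubicVec_vecMul_apply, hα, hδ] using (hquad t ht _ rfl).1)
    (fun t ht => by simpa [cubicVec_vecMul_apply, hα, hδ] using (hquad t ht _ rfl).2)
  have hβ0 : β ≠ 0 := by
    rintro rfl
    simp [hα0] at hβ
  simp only [funext_iff, row_apply] at ha hb
  refine ⟨Units.mk0 δ hδ0, Units.mk0 (β / δ) (div_ne_zero hβ0 hδ0), ?_⟩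
  ext i j
  fin_cases i <;> fin_cases j <;> simp [symCube, hα, hβ, ha, hb, hδ] <;> field_simp

theorem exists_row_eq_single_of_projAct_span {A : GL (Fin 4) F} {x : Fin 2 → F} {i : Fin 4}
    (hx : cubicVec x = Pi.single i 1)
    (h : projAct F A (span F {cubicVec x}) = span F {cubicVec x}) :
    ∃ c, A.1.row i = Pi.single i c := by
  rw [projAct_span_singleton, hx, single_one_vecMul] at h
  obtain ⟨c, hc⟩ := mem_span_singleton.1 (h ▸ mem_span_singleton_self (A.1.row i))
  exact ⟨c, by rw [← hc, ← Pi.single_smul, smul_eq_mul, mul_one]⟩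

theorem exists_projAct_eq_cubicProj_of_fixes (hF : 4 < #F) {A : GL (Fin 4) F}
    (hA : Set.MapsTo (projAct F A) (twistedCubic F) (twistedCubic F))
    (hinf : projAct F A (span F {cubicVec ![1, 0]}) = span F {cubicVec ![1, 0]})
    (hzero : projAct F A (span F {cubicVec ![0, 1]}) = span F {cubicVec ![0, 1]}) :
    ∃ g, projAct F A = cubicProj g := by
  obtain ⟨α, hα⟩ := exists_row_eq_single_of_projAct_span (i := 0)
    (by ext i; fin_cases i <;> simp [cubicVec]) hinf
  obtain ⟨δ, hδ⟩ := exists_row_eq_single_of_projAct_span (i := 3)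
    (by ext i; fin_cases i <;> simp [cubicVec]) hzero
  obtain ⟨c, m, hm⟩ := exists_eq_smul_symCube_diagonal hF (A.isUnit.map detMonoidHom).ne_zero hα hδ
    fun t _ v hv => quadrics_of_mem_twistedCubic (by
      rw [← hv, ← projAct_span_singleton]
      exact hA (mem_twistedCubic_iff.2 ⟨_, by simp, rfl⟩))
  exact ⟨GeneralLinearGroup.mkOfDetNeZero (diagonal ![m.1, 1]) (by simp),
    projAct_eq_of_smul c.ne_zero hm⟩

theorem exists_GL_rows_eq {x y : Fin 2 → F} (hxy : LinearIndependent F ![x, y]) :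
    ∃ g : GL (Fin 2) F, ![1, 0] ᵥ* g.1 = x ∧ ![0, 1] ᵥ* g.1 = y := by
  obtain ⟨g, hg⟩ := linearIndependent_rows_iff_isUnit (A := Matrix.of ![x, y]).1 hxy
  refine ⟨g, ?_, ?_⟩ <;> ext i <;> fin_cases i <;> simp [hg, vecMul, dotProduct]

theorem Gq_eq_range_cubicProj (hF : 4 < #F) : Gq F = Set.range (cubicProj (F := F)) := by
  refine Set.Subset.antisymm ?_ (Set.range_subset_iff.2 cubicProj_mem_Gq)
  rintro _ ⟨⟨A, rfl⟩, hA⟩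
  have hmaps := Set.mapsTo_iff_image_subset.2 hA.subset
  obtain ⟨x, hx, hAx⟩ := mem_twistedCubic_iff.1
    (hmaps (mem_twistedCubic_iff.2 ⟨![1, 0], by simp, rfl⟩))
  obtain ⟨y, hy, hAy⟩ := mem_twistedCubic_iff.1
    (hmaps (mem_twistedCubic_iff.2 ⟨![0, 1], by simp, rfl⟩))
  have hxy : LinearIndependent F ![x, y] := by
    by_contra h
    rw [← span_cubicVec_eq_iff hx hy, ← hAx, ← hAy, (projAct_injective A).eq_iff,
      span_cubicVec_eq_iff (by simp) (by simp)] at h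
    exact h (by simp [linearIndependent_pair_iff_det_ne_zero])
  obtain ⟨g, rfl, rfl⟩ := exists_GL_rows_eq hxy
  let B := A * Units.map symCube g⁻¹
  have hB : projAct F B = cubicProj g⁻¹ ∘ projAct F A := projAct_mul ..
  obtain ⟨d, hd⟩ := exists_projAct_eq_cubicProj_of_fixes (A := B) hF
    (by
      rw [hB]
      exact (Set.mapsTo_iff_image_subset.2 (cubicProj_mem_Gq g⁻¹).2.subset).comp hmaps)
    (by simp [hB, hAx, cubicProj_span_cubicVec, -coe_units_inv])
    (by simp [hB, hAy, cubicProj_span_cubicVec, -coe_units_inv])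
  refine ⟨d * g, ?_⟩
  calc cubicProj (d * g) = cubicProj g ∘ projAct F B := by
        rw [hd, cubicProj, map_mul, projAct_mul, cubicProj, cubicProj]
    _ = projAct F (B * Units.map symCube g) := (projAct_mul B _).symm
    _ = projAct F A := by simp only [B, map_inv, inv_mul_cancel_right]

end ProjectivityGroup

section ScalarExtension

variable {F K n : Type*} [Field F] [Field K] [Algebra F K] [Fintype n]

theorem linearCombination_eq_dotProduct (u : n → K) (v : n → F) :
    Fintype.linearCombination F u v = u ⬝ᵥ algebraMap F K ∘ v := by
  simp [Fintype.linearCombination_apply, dotProduct, Algebra.smul_def, mul_comm]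

theorem linearIndependent_iff_dotProduct_injective {u : n → K} :
    LinearIndependent F u ↔ Function.Injective fun v : n → F => u ⬝ᵥ algebraMap F K ∘ v := by
  simp only [linearIndependent_iff_injective_fintypeLinearCombination,
    ← linearCombination_eq_dotProduct]

theorem vecMul_map_dotProduct (u : n → K) (g : Matrix n n F) (v : n → F) :
    (u ᵥ* g.map (algebraMap F K)) ⬝ᵥ algebraMap F K ∘ v =
      u ⬝ᵥ algebraMap F K ∘ (g *ᵥ v) := by
  rw [← dotProduct_mulVec]
  congr 1
  ext i
  exact (RingHom.map_mulVec (algebraMap F K) g v i).symm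

variable [DecidableEq n]

theorem linearIndependent_vecMul_map {u : n → K} (hu : LinearIndependent F u) (g : GL n F) :
    LinearIndependent F (u ᵥ* g.1.map (algebraMap F K)) := by
  rw [linearIndependent_iff_dotProduct_injective] at hu ⊢
  simp only [vecMul_map_dotProduct]
  exact hu.comp (mulVec_injective_of_isUnit g.isUnit)

theorem vecMul_map_injective {u : n → K} (hu : LinearIndependent F u) :
    Function.Injective fun g : GL n F => u ᵥ* g.1.map (algebraMap F K) := by
  intro g h hgh
  rw [linearIndependent_iff_dotProduct_injective] at hu
  refine Units.ext (ext_col fun j => hu ?_)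
  exact congrFun hgh j

theorem exists_vecMul_map_eq [Nonempty n] (hn : Fintype.card n = Module.finrank F K) {u w : n → K}
    (hu : LinearIndependent F u) (hw : LinearIndependent F w) :
    ∃ g : GL n F, u ᵥ* g.1.map (algebraMap F K) = w := by
  let bu := basisOfLinearIndependentOfCardEqFinrank hu hn
  let bw := basisOfLinearIndependentOfCardEqFinrank hw hn
  refine ⟨⟨bu.toMatrix bw, bw.toMatrix bu, bu.toMatrix_mul_toMatrix_flip bw,
    bw.toMatrix_mul_toMatrix_flip bu⟩, ?_⟩
  simpa [bu, bw] using bu.toMatrix_map_vecMul bw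

end ScalarExtension

section ImaginaryAxis

variable {F K : Type} [Field F] [Field K] [Algebra F K]

/-- The common `F`-rational points of the osculating plane over `K` at the point with homogeneous
parameter `u` and of all its conjugates. If `K` is a quadratic extension and `u 0`, `u 1` are
linearly independent over `F`, this is an imaginary axis. -/
def imagAxis (F : Type) {K : Type} [Field F] [Field K] [Algebra F K] (u : Fin 2 → K) :
    Submodule F (Fin 4 → F) :=
  LinearMap.ker (Fintype.linearCombination F (oscCoeffs u))

theorem mem_imagAxis_iff {u : Fin 2 → K} {v : Fin 4 → F} :
    v ∈ imagAxis F u ↔ oscCoeffs u ⬝ᵥ algebraMap F K ∘ v = 0 := by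
  rw [imagAxis, LinearMap.mem_ker, linearCombination_eq_dotProduct]

theorem imagAxis_smul (c : Kˣ) (u : Fin 2 → K) : imagAxis F (c • u) = imagAxis F u := by
  ext v
  simp [mem_imagAxis_iff, Units.smul_def, oscCoeffs_smul]

theorem map_oscCoeffs_dotProduct (σ : K →ₐ[F] K) (u : Fin 2 → K) (v : Fin 4 → F) :
    σ (oscCoeffs u ⬝ᵥ algebraMap F K ∘ v) = oscCoeffs (σ ∘ u) ⬝ᵥ algebraMap F K ∘ v := by
  rw [← AlgHom.coe_toRingHom, RingHom.map_dotProduct, oscCoeffs_map]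
  congr 1
  ext i
  simp

theorem imagAxis_conj (σ : K →ₐ[F] K) (u : Fin 2 → K) : imagAxis F (σ ∘ u) = imagAxis F u := by
  ext v
  rw [mem_imagAxis_iff, mem_imagAxis_iff, ← map_oscCoeffs_dotProduct, map_eq_zero]

theorem comap_imagAxis_vecMul (g : GL (Fin 2) F) (u : Fin 2 → K) :
    (imagAxis F (u ᵥ* g.1.map (algebraMap F K))).comap (vecMulLinear (symCube g.1)) =
      imagAxis F u := by
  ext v
  have hdet : (g.1.map (algebraMap F K)).det ≠ 0 := by
    rw [← RingHom.mapMatrix_apply, ← RingHom.map_det, _root_.map_ne_zero]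
    exact g.det_ne_zero
  have hmap : algebraMap F K ∘ (v ᵥ* symCube g.1) =
      (algebraMap F K ∘ v) ᵥ* symCube (g.1.map (algebraMap F K)) := by
    rw [symCube_map]
    exact funext (RingHom.map_vecMul _ _ _)
  rw [mem_comap, vecMulLinear_apply, mem_imagAxis_iff, mem_imagAxis_iff, hmap,
    oscCoeffs_vecMul_dotProduct, mul_eq_zero_iff_left (pow_ne_zero 3 hdet)]

theorem cubicProj_imagAxis (g : GL (Fin 2) F) (u : Fin 2 → K) :
    cubicProj g (imagAxis F u) = imagAxis F (u ᵥ* g.1.map (algebraMap F K)) := by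
  rw [← comap_imagAxis_vecMul g]
  refine map_comap_eq_of_surjective ?_ _
  exact vecMul_surjective_iff_isUnit.2 (Units.map symCube g).isUnit

theorem exists_eq_algebraMap_mul_add_mul (hK : Module.finrank F K = 2) {u : Fin 2 → K}
    (hu : LinearIndependent F u) (z : K) :
    ∃ a b : F, z = algebraMap F K a * u 0 + algebraMap F K b * u 1 := by
  have hz : z ∈ span F (Set.range u) := by
    rw [hu.span_eq_top_of_card_eq_finrank (by simp [hK])]
    trivial
  obtain ⟨c, rfl⟩ := (mem_span_range_iff_exists_fun F).1 hz
  exact ⟨c 0, c 1, by simp [Algebra.smul_def]⟩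

theorem finrank_imagAxis (hK : Module.finrank F K = 2) (h3 : (3 : F) ≠ 0) {u : Fin 2 → K}
    (hu : LinearIndependent F u) : Module.finrank F (imagAxis F u) = 2 := by
  have hsurj : Function.Surjective (Fintype.linearCombination F (oscCoeffs u)) := by
    intro z
    obtain ⟨a, b, hab⟩ := exists_eq_algebraMap_mul_add_mul hK hu (z / u 1 ^ 2)
    have ha3 : algebraMap F K a = 3 * algebraMap F K (a / 3) := by
      rw [← map_ofNat (algebraMap F K) 3, ← map_mul, mul_div_cancel₀ _ h3]
    refine ⟨![b, -(a / 3), 0, 0], ?_⟩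
    calc Fintype.linearCombination F (oscCoeffs u) ![b, -(a / 3), 0, 0]
        = u 1 ^ 2 * (algebraMap F K a * u 0 + algebraMap F K b * u 1) := by
          simp only [linearCombination_eq_dotProduct, oscCoeffs_dotProduct, ha3,
            Function.comp_apply, cons_val, map_neg, map_zero]
          ring
      _ = z := by rw [← hab, mul_div_cancel₀ _ (pow_ne_zero 2 (hu.ne_zero 1))]
  have hrank := (Fintype.linearCombination F (oscCoeffs u)).finrank_range_add_finrank_ker
  rw [LinearMap.range_eq_top.2 hsurj, finrank_top, hK, Module.finrank_fin_fun] at hrank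
  exact Nat.add_left_cancel hrank

variable {σ : K →ₐ[F] K}

theorem linearIndependent_conj (hK : Module.finrank F K = 2) (hσ : σ ≠ AlgHom.id F K)
    {u : Fin 2 → K} (hu : LinearIndependent F u) : LinearIndependent K ![u, σ ∘ u] := by
  rw [linearIndependent_pair_iff_det_ne_zero]
  intro h
  have hscale (z : K) : u 1 * σ z = σ (u 1) * z := by
    obtain ⟨a, b, rfl⟩ := exists_eq_algebraMap_mul_add_mul hK hu z
    simp only [map_add, map_mul, AlgHom.commutes, Function.comp_apply] at h ⊢
    linear_combination -algebraMap F K a * h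
  have hone : u 1 = σ (u 1) := by simpa using hscale 1
  refine hσ (AlgHom.ext fun z => mul_left_cancel₀ (hu.ne_zero 1) ?_)
  rw [hscale, ← hone, AlgHom.id_apply]

theorem eq_zero_of_conj_combination_eq_zero (hK : Module.finrank F K = 2)
    (hσ : σ ≠ AlgHom.id F K) {u : Fin 2 → K} (hu : LinearIndependent F u) {x y : K}
    (h : u 0 * x + u 1 * y = 0) (hconj : u 0 * σ x + u 1 * σ y = 0) : x = 0 ∧ y = 0 := by
  have hdet := linearIndependent_pair_iff_det_ne_zero.1 (linearIndependent_conj hK hσ hu)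
  have hmap : σ (u 0) * σ x + σ (u 1) * σ y = 0 := by simp only [← map_mul, ← map_add, h, map_zero]
  simp only [Function.comp_apply] at hdet
  constructor <;> refine (map_eq_zero σ).1 (mul_left_cancel₀ hdet ?_)
  · linear_combination σ (u 1) * hconj - u 1 * hmap
  · linear_combination u 0 * hmap - σ (u 0) * hconj

theorem mem_planeOf_iff {k : Type} [Field k] {c v : Fin 4 → k} :
    v ∈ planeOf k c ↔ c ⬝ᵥ v = 0 := by
  simp [planeOf, planeForm, dotProduct, Fin.sum_univ_four]

theorem extendSub_imagAxis (hK : Module.finrank F K = 2) (hσ : σ ≠ AlgHom.id F K)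
    {u : Fin 2 → K} (hu : LinearIndependent F u) :
    extendSub F K (imagAxis F u) = planeOf K (oscCoeffs u) ⊓ planeOf K (oscCoeffs (σ ∘ u)) := by
  refine le_antisymm (span_le.2 ?_) fun v hv => ?_
  · rintro _ ⟨v, hv, rfl⟩
    exact ⟨mem_planeOf_iff.2 (mem_imagAxis_iff.1 hv),
      mem_planeOf_iff.2 (mem_imagAxis_iff.1 (imagAxis_conj σ u ▸ hv))⟩
  · have hvu := mem_planeOf_iff.1 hv.1
    have hvσ := mem_planeOf_iff.1 hv.2
    choose a b hab using fun i => exists_eq_algebraMap_mul_add_mul hK hu (v i)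
    obtain rfl : v = u 0 • (algebraMap F K ∘ a) + u 1 • (algebraMap F K ∘ b) :=
      funext fun i => by simp [hab, mul_comm]
    simp only [dotProduct_add, dotProduct_smul, smul_eq_mul, ← map_oscCoeffs_dotProduct] at hvu hvσ
    obtain ⟨ha, hb⟩ := eq_zero_of_conj_combination_eq_zero hK hσ hu hvu hvσ
    exact add_mem (smul_mem _ _ (subset_span ⟨a, mem_imagAxis_iff.2 ha, rfl⟩))
      (smul_mem _ _ (subset_span ⟨b, mem_imagAxis_iff.2 hb, rfl⟩))

theorem imagAxis_eq_iff (hK : Module.finrank F K = 2) (h3 : (3 : F) ≠ 0) (hσ : σ ≠ AlgHom.id F K)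
    {u w : Fin 2 → K} (hu : LinearIndependent F u) (hw : LinearIndependent F w) :
    imagAxis F w = imagAxis F u ↔ (∃ c : Kˣ, c • u = w) ∨ ∃ c : Kˣ, c • (σ ∘ u) = w := by
  have hu0 : u ≠ 0 := fun h => hu.ne_zero 0 (congrFun h 0)
  have hw0 : w ≠ 0 := fun h => hw.ne_zero 0 (congrFun h 0)
  have hσu0 : σ ∘ u ≠ 0 := fun h => hu.ne_zero 0 ((map_eq_zero σ).1 (congrFun h 0))
  have h3K : (3 : K) ≠ 0 := by rwa [← map_ofNat (algebraMap F K) 3, _root_.map_ne_zero]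
  constructor
  · intro h
    -- As `z` varies, these symmetric products sweep out the extended axis of `u`.
    have hv (z : Fin 2 → K) : oscCoeffs w ⬝ᵥ symProd u (σ ∘ u) z = 0 := by
      have hmem : symProd u (σ ∘ u) z ∈ extendSub F K (imagAxis F w) := by
        rw [h, extendSub_imagAxis hK hσ hu]
        constructor <;> rw [SetLike.mem_coe, mem_planeOf_iff, oscCoeffs_dotProduct_symProd] <;> ring
      rw [extendSub_imagAxis hK hσ hw] at hmem
      exact mem_planeOf_iff.1 hmem.1
    have hprod := hv ![1, 0]
    simp only [oscCoeffs_dotProduct_symProd, mul_eq_zero, h3K, false_or, cons_val_zero,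
      cons_val_one, one_mul, zero_mul, sub_zero, hw.ne_zero 1, or_false] at hprod
    refine hprod.imp (fun h => ?_) fun h => ?_
    · exact exists_smul_eq_of_not_linearIndependent hu0 hw0
        (mt linearIndependent_pair_iff_det_ne_zero.1 (not_not.2 h))
    · exact exists_smul_eq_of_not_linearIndependent hσu0 hw0
        (mt linearIndependent_pair_iff_det_ne_zero.1 (not_not.2 h))
  · rintro (⟨c, rfl⟩ | ⟨c, rfl⟩)
    · exact imagAxis_smul c u
    · rw [imagAxis_smul, imagAxis_conj]

end ImaginaryAxis

section Stabilizer

variable {F K : Type} [Field F] [Field K] [Algebra F K]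

theorem ncard_eq_mul_ncard_image {α β : Type*} {s : Set α} (hs : s.Finite) {f : α → β} {n : ℕ}
    (hfiber : ∀ a ∈ s, {b ∈ s | f b = f a}.ncard = n) : s.ncard = n * (f '' s).ncard := by
  classical
  lift s to Finset α using hs
  rw [← Finset.coe_image, Set.ncard_coe_finset, Set.ncard_coe_finset, mul_comm, ← smul_eq_mul,
    Finset.card_eq_sum_card_image f s]
  refine Finset.sum_eq_card_nsmul fun b hb => ?_
  obtain ⟨a, ha, rfl⟩ := Finset.mem_image.1 hb
  rw [← hfiber a ha, ← Set.ncard_coe_finset, Finset.coe_filter]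
  rfl

theorem lineStab_imagAxis (hF : 4 < #F) (u : Fin 2 → K) :
    lineStab F (imagAxis F u) =
      cubicProj '' {g | imagAxis F (u ᵥ* g.1.map (algebraMap F K)) = imagAxis F u} := by
  ext f
  simp only [lineStab, Gq_eq_range_cubicProj hF, Set.mem_image, Set.mem_ofPred_eq,
    ← cubicProj_imagAxis]
  constructor
  · rintro ⟨⟨g, rfl⟩, hg⟩
    exact ⟨g, hg, rfl⟩
  · rintro ⟨g, hg, rfl⟩
    exact ⟨⟨g, rfl⟩, hg⟩

theorem linearIndependent_units_smul {ι : Type*} {u : ι → K} (hu : LinearIndependent F u) (c : Kˣ) :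
    LinearIndependent F (c • u) :=
  hu.map' (LinearMap.mulLeft F c.1) (LinearMap.ker_eq_bot.2 (mul_right_injective₀ c.ne_zero))

theorem smul_left_injective_units {k V : Type*} [Field k] [AddCommGroup V] [Module k V] {u : V}
    (hu : u ≠ 0) : Function.Injective fun c : kˣ => c • u :=
  (smul_left_injective k hu).comp Units.val_injective

variable {σ : K →ₐ[F] K}

theorem image_vecMul_setOf_imagAxis_eq (hK : Module.finrank F K = 2) (h3 : (3 : F) ≠ 0)
    (hσ : σ ≠ AlgHom.id F K) {u : Fin 2 → K} (hu : LinearIndependent F u) :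
    (fun g : GL (Fin 2) F => u ᵥ* g.1.map (algebraMap F K)) ''
        {g | imagAxis F (u ᵥ* g.1.map (algebraMap F K)) = imagAxis F u} =
      Set.range (fun c : Kˣ => c • u) ∪ Set.range (fun c : Kˣ => c • (σ ∘ u)) := by
  have hσu : LinearIndependent F (σ ∘ u) :=
    hu.map' σ.toLinearMap (LinearMap.ker_eq_bot.2 σ.injective)
  ext w
  constructor
  · rintro ⟨g, hg, rfl⟩
    exact (imagAxis_eq_iff hK h3 hσ hu (linearIndependent_vecMul_map hu g)).1 hg
  · intro h
    have hw : LinearIndependent F w := by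
      rcases h with ⟨c, rfl⟩ | ⟨c, rfl⟩
      · exact linearIndependent_units_smul hu c
      · exact linearIndependent_units_smul hσu c
    obtain ⟨g, rfl⟩ := exists_vecMul_map_eq (by simp [hK]) hu hw
    exact ⟨g, (imagAxis_eq_iff hK h3 hσ hu hw).2 h, rfl⟩

theorem disjoint_range_smul {k V : Type*} [Field k] [AddCommGroup V] [Module k V] {u w : V}
    (h : LinearIndependent k ![u, w]) :
    Disjoint (Set.range fun c : kˣ => c • u) (Set.range fun c : kˣ => c • w) := by
  rw [Set.disjoint_left]
  rintro _ ⟨c, rfl⟩ ⟨d, hd⟩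
  refine (LinearIndependent.pair_iff' (h.ne_zero 0)).1 h (d⁻¹ * c).1 ?_
  exact (mul_smul d⁻¹ c u).trans (inv_smul_eq_iff.2 hd.symm)

theorem ncard_setOf_imagAxis_vecMul_eq [Finite K] (hK : Module.finrank F K = 2) (h3 : (3 : F) ≠ 0)
    (hσ : σ ≠ AlgHom.id F K) {u : Fin 2 → K} (hu : LinearIndependent F u) :
    {g : GL (Fin 2) F | imagAxis F (u ᵥ* g.1.map (algebraMap F K)) = imagAxis F u}.ncard =
      2 * Nat.card Kˣ := by
  have hconj := linearIndependent_conj hK hσ hu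
  have hu0 : u ≠ 0 := hconj.ne_zero 0
  have hσu0 : σ ∘ u ≠ 0 := hconj.ne_zero 1
  rw [← Set.ncard_image_of_injective _ (vecMul_map_injective hu),
    image_vecMul_setOf_imagAxis_eq hK h3 hσ hu, Set.ncard_union_eq (disjoint_range_smul hconj),
    Set.ncard_range_of_injective (smul_left_injective_units hu0),
    Set.ncard_range_of_injective (smul_left_injective_units hσu0), two_mul]

theorem ncard_fiber_cubicProj (g : GL (Fin 2) F) :
    {h : GL (Fin 2) F | cubicProj h = cubicProj g}.ncard = Nat.card Fˣ := by
  have hrange : {h | cubicProj h = cubicProj g} = Set.range fun c : Fˣ => c • g := by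
    ext h
    exact eq_comm.trans cubicProj_eq_iff
  have hinj : Function.Injective fun c : Fˣ => c • g := fun c d hcd =>
    Units.ext (smul_left_injective F g.ne_zero (congrArg Units.val hcd))
  rw [hrange, Set.ncard_range_of_injective hinj]

theorem ncard_lineStab_imagAxis [Finite F] (hF : 4 < #F) (hK : Module.finrank F K = 2)
    (h3 : (3 : F) ≠ 0) (hσ : σ ≠ AlgHom.id F K) {u : Fin 2 → K} (hu : LinearIndependent F u) :
    (lineStab F (imagAxis F u)).ncard = 2 * (Nat.card F + 1) := by
  have : Module.Finite F K := Module.finite_of_finrank_eq_succ hK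
  have : Finite K := Module.finite_of_finite F
  let s := {g : GL (Fin 2) F | imagAxis F (u ᵥ* g.1.map (algebraMap F K)) = imagAxis F u}
  have hmem {g : GL (Fin 2) F} : g ∈ s ↔ cubicProj g (imagAxis F u) = imagAxis F u := by
    rw [cubicProj_imagAxis]
    rfl
  have hfiber (g : GL (Fin 2) F) (hg : g ∈ s) :
      {h ∈ s | cubicProj h = cubicProj g}.ncard = Nat.card Fˣ := by
    rw [← ncard_fiber_cubicProj g]
    congr 1
    ext h
    refine and_iff_right_of_imp fun (hhg : cubicProj h = cubicProj g) => ?_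
    rw [hmem, hhg, ← hmem]
    exact hg
  have hcount := ncard_eq_mul_ncard_image (Set.toFinite _) hfiber
  rw [ncard_setOf_imagAxis_vecMul_eq hK h3 hσ hu, ← lineStab_imagAxis hF, Nat.card_units,
    Nat.card_units, Module.natCard_eq_pow_finrank (K := F), hK] at hcount
  refine Nat.eq_of_mul_eq_mul_left (Nat.sub_pos_of_lt (Finite.one_lt_card (α := F))) ?_
  rw [← hcount, ← one_pow 2, Nat.sq_sub_sq, one_pow]
  ring

end Stabilizer

section FiniteField

open Polynomial

variable {F K : Type*} [Field F] [Field K] [Algebra F K]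

theorem frobeniusAlgHom_ne_id [Fintype F] [Finite K] (hK : 1 < Module.finrank F K) :
    FiniteField.frobeniusAlgHom F K ≠ AlgHom.id F K := by
  intro h
  have horder := FiniteField.orderOf_frobeniusAlgHom F K
  rw [h] at horder
  exact hK.ne (orderOf_one.symm.trans horder)

theorem exists_aeval_eq_zero_of_irreducible [Finite F] [Finite K] {p : F[X]} (hp : Irreducible p)
    (hdvd : p.natDegree ∣ Module.finrank F K) : ∃ x : K, aeval x p = 0 := by
  have : Fact (Irreducible p) := ⟨hp⟩
  have : Module.Finite F (AdjoinRoot p) := (AdjoinRoot.powerBasis hp.ne_zero).finite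
  have : Finite (AdjoinRoot p) := Module.finite_of_finite F
  obtain ⟨φ⟩ := FiniteField.nonempty_algHom_of_finrank_dvd (F := F) (K := AdjoinRoot p) (L := K)
    (by rwa [(AdjoinRoot.powerBasis hp.ne_zero).finrank, AdjoinRoot.powerBasis_dim])
  exact ⟨φ (AdjoinRoot.root p), by rw [aeval_algHom_apply, AdjoinRoot.aeval_eq, AdjoinRoot.mk_self,
    map_zero]⟩

theorem exists_notMem_range_sq_add_mul_add_eq_zero [Finite F] (hK : Module.finrank F K = 2)
    {b c : F} (h : ∀ x : F, x ^ 2 + b * x + c ≠ 0) :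
    ∃ t ∉ Set.range (algebraMap F K),
      t ^ 2 + algebraMap F K b * t + algebraMap F K c = 0 := by
  have : Module.Finite F K := Module.finite_of_finrank_eq_succ hK
  have : Finite K := Module.finite_of_finite F
  have hdeg : (X ^ 2 + C b * X + C c : F[X]).natDegree = 2 := by compute_degree!
  have hirr : Irreducible (X ^ 2 + C b * X + C c : F[X]) :=
    irreducible_of_degree_le_three_of_not_isRoot (by simp [hdeg]) (by simpa [IsRoot] using h)
  obtain ⟨t, ht⟩ := exists_aeval_eq_zero_of_irreducible (K := K) hirr (by rw [hdeg, hK])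
  have hroot : t ^ 2 + algebraMap F K b * t + algebraMap F K c = 0 := by simpa using ht
  refine ⟨t, ?_, hroot⟩
  rintro ⟨x, rfl⟩
  refine h x ((algebraMap F K).injective ?_)
  simpa using hroot

theorem sum_sq_add_self_pow_two_pow {R : Type*} [CommRing R] [CharP R 2] (x : R) (n : ℕ) :
    ∑ i ∈ Finset.range n, (x ^ 2 + x) ^ 2 ^ i = x ^ 2 ^ n + x := by
  induction n with
  | zero => simp [CharTwo.add_self_eq_zero]
  | succ n ih =>
    rw [Finset.sum_range_succ, ih, add_pow_char_pow, ← pow_mul, ← pow_succ']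
    linear_combination (x ^ 2 ^ n) * (CharTwo.two_eq_zero (R := R))

theorem sq_add_self_add_ne_zero_of_trace_eq_one [Fintype F] {n : ℕ}
    (hcard : Fintype.card F = 2 ^ n) {η : F} (hη : ∑ i ∈ Finset.range n, η ^ 2 ^ i = 1) (x : F) :
    x ^ 2 + x + η ≠ 0 := by
  intro hx
  have : CharP F 2 := charP_of_card_eq_prime_pow hcard
  obtain rfl : x ^ 2 + x = η := CharTwo.add_eq_zero.1 hx
  rw [sum_sq_add_self_pow_two_pow, ← hcard, FiniteField.pow_card, CharTwo.add_self_eq_zero] at hη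
  exact zero_ne_one hη

theorem natCast_ne_zero_of_not_dvd_card [Fintype F] {p : ℕ} (hp : p.Prime)
    (h : ¬ p ∣ Fintype.card F) : (p : F) ≠ 0 := by
  have : Fact p.Prime := ⟨hp⟩
  intro hp0
  have horder : addOrderOf (1 : F) = p :=
    addOrderOf_eq_prime (by rw [nsmul_one, hp0]) one_ne_zero
  exact h (horder ▸ addOrderOf_dvd_card)

end FiniteField

section Classification

variable {F K : Type} [Field F] [Field K] [Algebra F K]

theorem linearIndependent_self_one_iff {t : K} :
    LinearIndependent F ![t, 1] ↔ t ∉ Set.range (algebraMap F K) := by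
  rw [LinearIndependent.pair_symm_iff, LinearIndependent.pair_iff' one_ne_zero, Set.mem_range,
    not_exists]
  simp only [Algebra.algebraMap_eq_smul_one]

theorem oscCoeffs_self_one {R : Type*} [CommRing R] (t : R) :
    oscCoeffs ![t, 1] = ![1, -(3 * t), 3 * t ^ 2, -(t ^ 3)] := by
  simp [oscCoeffs]

theorem exists_imagAxis_eq_self_one {u : Fin 2 → K} (hu : LinearIndependent F u) :
    ∃ t ∉ Set.range (algebraMap F K), imagAxis F u = imagAxis F ![t, 1] := by
  have h1 : u 1 ≠ 0 := hu.ne_zero 1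
  have hscale : (Units.mk0 (u 1) h1)⁻¹ • u = ![u 0 / u 1, 1] := by
    ext i
    fin_cases i <;> simp [Units.smul_def, h1, div_eq_inv_mul]
  refine ⟨u 0 / u 1, ?_, ?_⟩
  · rw [← linearIndependent_self_one_iff, ← hscale]
    exact linearIndependent_units_smul hu _
  · rw [← hscale, imagAxis_smul]

theorem isImagAxis_iff [Fintype F] (hK : Module.finrank F K = 2) (h3 : (3 : F) ≠ 0)
    {ℓ : Submodule F (Fin 4 → F)} :
    isImagAxis F K (Fintype.card F) ℓ ↔
      ∃ u : Fin 2 → K, LinearIndependent F u ∧ ℓ = imagAxis F u := by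
  have : Module.Finite F K := Module.finite_of_finrank_eq_succ hK
  have : Finite K := Module.finite_of_finite F
  constructor
  · rintro ⟨hline, t, ht, hℓ⟩
    have hu := linearIndependent_self_one_iff.2 ht
    refine ⟨![t, 1], hu, eq_of_le_of_finrank_eq (fun v hv => ?_)
      (hline.trans (finrank_imagAxis hK h3 hu).symm)⟩
    have hmem : algebraMap F K ∘ v ∈ extendSub F K ℓ := subset_span ⟨v, hv, rfl⟩
    rw [hℓ, ← oscCoeffs_self_one] at hmem
    exact mem_imagAxis_iff.2 (mem_planeOf_iff.1 hmem.1)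
  · rintro ⟨u, hu, rfl⟩
    obtain ⟨t, ht, htu⟩ := exists_imagAxis_eq_self_one hu
    refine ⟨finrank_imagAxis hK h3 hu, t, ht, ?_⟩
    have hfrob : FiniteField.frobeniusAlgHom F K ∘ ![t, 1] = ![t ^ Fintype.card F, 1] := by
      ext i
      fin_cases i <;> simp
    rw [htu, extendSub_imagAxis hK (frobeniusAlgHom_ne_id (hK ▸ one_lt_two))
      (linearIndependent_self_one_iff.2 ht), hfrob, oscCoeffs_self_one, oscCoeffs_self_one]

theorem setOf_isImagAxis_eq_lineOrbit [Fintype F] (hF : 4 < #F) (hK : Module.finrank F K = 2)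
    (h3 : (3 : F) ≠ 0) {u : Fin 2 → K} (hu : LinearIndependent F u) :
    {ℓ | isImagAxis F K (Fintype.card F) ℓ} = lineOrbit F (imagAxis F u) := by
  ext ℓ
  change isImagAxis F K _ ℓ ↔ ∃ f ∈ Gq F, f (imagAxis F u) = ℓ
  rw [isImagAxis_iff hK h3, Gq_eq_range_cubicProj hF, Set.exists_range_iff]
  simp only [cubicProj_imagAxis]
  constructor
  · rintro ⟨w, hw, rfl⟩
    obtain ⟨g, rfl⟩ := exists_vecMul_map_eq (by simp [hK]) hu hw
    exact ⟨g, rfl⟩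
  · rintro ⟨g, rfl⟩
    exact ⟨_, linearIndependent_vecMul_map hu g, rfl⟩

theorem span_pair_eq_imagAxis (hK : Module.finrank F K = 2) (h3 : (3 : F) ≠ 0)
    {u : Fin 2 → K} (hu : LinearIndependent F u) {a b : Fin 4 → F}
    (hab : LinearIndependent F ![a, b]) (ha : a ∈ imagAxis F u) (hb : b ∈ imagAxis F u) :
    span F {a, b} = imagAxis F u := by
  refine eq_of_le_of_finrank_eq (span_le.2 (Set.pair_subset ha hb)) ?_
  have hrank := finrank_span_eq_card hab
  rw [range_cons_cons_empty] at hrank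
  rw [hrank, finrank_imagAxis hK h3 hu, Fintype.card_fin]

theorem vec_mem_imagAxis_iff {x y : K} {a b c d : F} :
    ![a, b, c, d] ∈ imagAxis F ![x, y] ↔
      y ^ 3 * algebraMap F K a - 3 * x * y ^ 2 * algebraMap F K b +
        3 * x ^ 2 * y * algebraMap F K c - x ^ 3 * algebraMap F K d = 0 := by
  rw [mem_imagAxis_iff, oscCoeffs_dotProduct]
  rfl

theorem isImagAxis_span_of_forall_sq_ne [Fintype F] (hK : Module.finrank F K = 2)
    (h3 : (3 : F) ≠ 0) {ρ : F} (hρ : ∀ s, s ^ 2 ≠ ρ) :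
    isImagAxis F K (Fintype.card F) (span F {![0, 1, 0, -(3 * ρ)], ![-(3 / ρ), 0, 1, 0]}) := by
  obtain ⟨s, hs, hsρ⟩ := exists_notMem_range_sq_add_mul_add_eq_zero (K := K) hK (b := 0) (c := -ρ)
    fun x => by simpa [← sub_eq_add_neg, sub_eq_zero] using hρ x
  have hs2 : s ^ 2 = algebraMap F K ρ := by simpa [← sub_eq_add_neg, sub_eq_zero] using hsρ
  have hu : LinearIndependent F ![1, s] :=
    LinearIndependent.pair_symm_iff.1 (linearIndependent_self_one_iff.2 hs)
  refine (isImagAxis_iff hK h3).2 ⟨_, hu, span_pair_eq_imagAxis hK h3 hu ?_ ?_ ?_⟩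
  · refine LinearIndependent.pair_iff.2 fun x y hxy => ⟨?_, ?_⟩
    · simpa using congrFun hxy 1
    · simpa using congrFun hxy 2
  · rw [vec_mem_imagAxis_iff, map_neg, map_mul, ← hs2, map_ofNat, map_zero, map_one]
    ring
  · rw [vec_mem_imagAxis_iff, map_neg, map_div₀, ← hs2, map_ofNat, map_zero, map_one]
    field_simp
    ring

theorem isImagAxis_span_of_trace_eq_one [Fintype F] (hK : Module.finrank F K = 2)
    (h3 : (3 : F) ≠ 0) {n : ℕ} (hcard : Fintype.card F = 2 ^ n) {η : F}
    (hη : ∑ i ∈ Finset.range n, η ^ 2 ^ i = 1) :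
    isImagAxis F K (Fintype.card F) (span F {![η, 1, 1, 0], ![η, η + 1, 0, 1]}) := by
  have : CharP F 2 := charP_of_card_eq_prime_pow hcard
  have : CharP K 2 := charP_of_injective_algebraMap (algebraMap F K).injective 2
  have h2 : (2 : K) = 0 := CharTwo.two_eq_zero
  obtain ⟨t, ht, htη⟩ := exists_notMem_range_sq_add_mul_add_eq_zero (K := K) hK (b := 1) (c := η)
    fun x => by simpa using sq_add_self_add_ne_zero_of_trace_eq_one hcard hη x
  have hu := linearIndependent_self_one_iff.2 ht
  rw [map_one, one_mul] at htη
  refine (isImagAxis_iff hK h3).2 ⟨_, hu, span_pair_eq_imagAxis hK h3 hu ?_ ?_ ?_⟩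
  · refine LinearIndependent.pair_iff.2 fun x y hxy => ⟨?_, ?_⟩
    · simpa using congrFun hxy 2
    · simpa using congrFun hxy 3
  · rw [vec_mem_imagAxis_iff, map_zero, map_one]
    linear_combination htη + (t ^ 2 - 2 * t) * h2
  · rw [vec_mem_imagAxis_iff, map_add, map_zero, map_one]
    linear_combination (t + 1) * htη -
      (t ^ 3 + t ^ 2 + 2 * t * algebraMap F K η + 2 * t) * h2

end Classification

end TwistedCubic

open TwistedCubic in
theorem stmt_8 (q : ℕ) (F : Type) [Field F] [Fintype F]
    (hcard : Fintype.card F = q) (K : Type) [Field K] [Fintype K] [Algebra F K] (hcardK : Fintype.card K = q ^ 2) (hq : 5 ≤ q) (hq3 : q % 3 ≠ 0) :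
    (∃ ℓ₀ : Submodule F (Fin 4 → F), {ℓ : Submodule F (Fin 4 → F) | isImagAxis F K q ℓ} = lineOrbit F ℓ₀) ∧
    (∀ ℓ : Submodule F (Fin 4 → F), isImagAxis F K q ℓ → (lineStab F ℓ).ncard = 2 * (q + 1)) ∧
    (∀ ρ : F, Odd q → (¬ ∃ s : F, s ^ 2 = ρ) →
      isImagAxis F K q (Submodule.span F ({![0, 1, 0, -(3 * ρ)], ![-(3 / ρ), 0, 1, 0]} : Set (Fin 4 → F)))) ∧
    (∀ (h : ℕ) (η : F), q = 2 ^ h → (∑ i ∈ Finset.range h, η ^ 2 ^ i) = 1 →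
      isImagAxis F K q (Submodule.span F ({![η, 1, 1, 0], ![η, η + 1, 0, 1]} : Set (Fin 4 → F)))) := by
  subst hcard
  have hF : 4 < Cardinal.mk F := by
    rw [Cardinal.mk_fintype]
    exact_mod_cast hq
  have hK : Module.finrank F K = 2 :=
    Nat.pow_right_injective (by lia) ((Module.card_eq_pow_finrank (K := F)).symm.trans hcardK)
  have h3 : (3 : F) ≠ 0 :=
    mod_cast natCast_ne_zero_of_not_dvd_card Nat.prime_three (mt Nat.mod_eq_zero_of_dvd hq3)
  have hbasis := (Module.finBasisOfFinrankEq F K hK).linearIndependent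
  refine ⟨⟨_, setOf_isImagAxis_eq_lineOrbit hF hK h3 hbasis⟩, fun ℓ hℓ => ?_,
    fun ρ _ hρ => isImagAxis_span_of_forall_sq_ne hK h3 (not_exists.1 hρ),
    fun _ _ hcard hη => isImagAxis_span_of_trace_eq_one hK h3 hcard hη⟩
  obtain ⟨w, hw, rfl⟩ := (isImagAxis_iff hK h3).1 hℓ
  rw [← Nat.card_eq_fintype_card]
  exact ncard_lineStab_imagAxis hF hK h3 (frobeniusAlgHom_ne_id (hK ▸ one_lt_two)) hw
end
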